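/- Let n ≥ 4 and let P = {p_0, …, p_{n−1}} be n distinct points on the unit circle listed in counterclockwise cyclic order. If P contains no symmetric quadruple, then P admits exactly one angle maximal triangulation (equivalently, exactly one length maximal triangulation). -/

import Mathlib

/-!
Vertices are indexed by `ℤ`, with period `N`, and placed by half-angles `t` such that
`t (k + N) = t k + π`; the segment joining `a < b < a + N` then has length
`2 * sin (t b - t a)`. Lists of reals are compared through multiplicities (`SLt`): the sorted list
of `M` precedes that of `M'` if at the first value where the multiplicities differ `M` has more
copies. This makes it easy to cancel common parts and to apply monotone maps.

*Uniqueness of the length maximal triangulation* (`LM.unique`) goes by induction on `N`. Two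
length maximal triangulations have the same lengths (`LM.lens_eq`). If they share an ear, cutting it
off leaves two maximal triangulations of a smaller polygon (`LM.cut`). So it suffices to find a
common ear (`exists_common_ear`). A shortest diagonal of a triangulation is an ear
(`Tri.min_ear`), by unimodality of the sine. Without symmetric quadruples, crossing segments have
different lengths by definition, and so do disjoint ones, because the endpoints of two disjoint
segments of equal length form an isosceles trapezoid with equal diagonals (`Circ.disj`). Hence two
ears of equal length have tips at distance at most two (`Circ.eq_ear`). If there were no common
ear, the shortest ears of the two triangulations would thus be at tips `i` and `i + 2`, and unique.
Each triangulation has another, longer ear. If two vertices at distance at least two have ears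
longer than the common minimum `m`, the diagonals separating them can be completed to a
triangulation all of whose lengths exceed `m`, because a diagonal separating the tips of two ears
is at least as long as the shorter of them; this contradicts maximality (`Cfg.nonadj`). So the long ears of
the two triangulations have adjacent tips (`Cfg.exists_far`); let `c` be the tip of the longer one.
Now take a triangulation with ears at `c` and at one of `i`, `i + 2`, in which the second diagonal
at the latter ear is the longer of `{i - 1, i + 2}` and `{i, i + 3}` (`fanL`, `fanR`). It has the
minimum `m` only once, and its other lengths exceed some length above `m` of the given
triangulations, a contradiction (`Cfg.core_left`, `Cfg.core_right`).

*Angles.* By the inscribed angle theorem the angle opposite to a side depends only on that side.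
Summing over triangles (`Tri.sum_triangles`), every diagonal of half-length `ℓ` contributes the
angles `arcsin ℓ` and `π - arcsin ℓ`, and the edges of the polygon contribute a constant multiset
(`angs_eq`). As all `arcsin ℓ` are at most `π / 2`, comparing angles amounts to comparing lengths
(`sLt_angs_iff`), so the angle maximal triangulations are the length maximal ones
(`angleMaximal_iff`). A maximal triangulation exists since there are finitely many.
-/

/-- The point on the unit circle of `ℝ²` at angle `θ`. -/
noncomputable def pt (θ : ℝ) : EuclideanSpace ℝ (Fin 2) :=
  (WithLp.equiv 2 (Fin 2 → ℝ)).symm ![Real.cos θ, Real.sin θ]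

variable {n : ℕ} [NeZero n]

/-- `k` lies strictly between `i` and `j` in counterclockwise cyclic order. -/
def CcwBtw (i k j : ZMod n) : Prop :=
  0 < (k - i).val ∧ (k - i).val < (j - i).val

/-- `d` is a diagonal of the convex polygon on indices `ZMod n`. -/
def IsDiag (d : Sym2 (ZMod n)) : Prop :=
  ∃ i j : ZMod n, d = s(i, j) ∧ j ≠ i - 1 ∧ j ≠ i ∧ j ≠ i + 1

/-- `d` is a chord, i.e. a pair of cyclically consecutive indices. -/
def IsChord (d : Sym2 (ZMod n)) : Prop :=
  ∃ i : ZMod n, d = s(i, i + 1)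

/-- Two diagonals `{i, j}` and `{k, l}` cross if exactly one of `k`, `l` lies
strictly between `i` and `j` in cyclic order (equivalently, one of them lies
strictly in the arc from `i` to `j` and the other strictly in the arc from `j`
to `i`). -/
def Crosses (d e : Sym2 (ZMod n)) : Prop :=
  ∃ i j k l : ZMod n, d = s(i, j) ∧ e = s(k, l) ∧ CcwBtw i k j ∧ CcwBtw j l i

/-- A triangulation: `n - 3` pairwise non-crossing diagonals. -/
def IsTriangulation (τ : Finset (Sym2 (ZMod n))) : Prop :=
  τ.card = n - 3 ∧ (∀ d ∈ τ, IsDiag d) ∧ ∀ d ∈ τ, ∀ e ∈ τ, ¬ Crosses d e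

/-- The length of the segment joining the two points indexed by `d`. -/
noncomputable def len (p : ZMod n → EuclideanSpace ℝ (Fin 2)) (d : Sym2 (ZMod n)) : ℝ :=
  Sym2.lift ⟨fun i j => ‖p i - p j‖, fun _ _ => norm_sub_rev _ _⟩ d

/-- `D(τ)`: the lengths of the diagonals of `τ` sorted in nondecreasing order. -/
noncomputable def sortedLengths (p : ZMod n → EuclideanSpace ℝ (Fin 2))
    (τ : Finset (Sym2 (ZMod n))) : List ℝ :=
  (τ.val.map (len p)).sort (· ≤ ·)

/-- Lexicographic order on lists of reals. -/
def lexLE (l l' : List ℝ) : Prop := l = l' ∨ List.Lex (· < ·) l l'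

/-- `τ` is length maximal: it is a triangulation whose sorted list of diagonal
lengths is greatest in the lexicographic order among all triangulations. -/
def LengthMaximal (p : ZMod n → EuclideanSpace ℝ (Fin 2))
    (τ : Finset (Sym2 (ZMod n))) : Prop :=
  IsTriangulation τ ∧
    ∀ τ' : Finset (Sym2 (ZMod n)), IsTriangulation τ' →
      lexLE (sortedLengths p τ') (sortedLengths p τ)

/-- A side of a triangle of `τ`: a chord, or a diagonal belonging to `τ`. -/
def IsSide (τ : Finset (Sym2 (ZMod n))) (d : Sym2 (ZMod n)) : Prop :=
  IsChord d ∨ d ∈ τ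

open scoped Classical in
/-- `A(τ)`: the `3(n-2)` angles of the triangles of `τ` sorted in nondecreasing
order.  Triangles are recorded as triples `a < b < c` (ordered by residue) all of
whose sides are chords or diagonals of `τ`, each contributing its three angles. -/
noncomputable def sortedAngles (p : ZMod n → EuclideanSpace ℝ (Fin 2))
    (τ : Finset (Sym2 (ZMod n))) : List ℝ :=
  ((Finset.univ.filter fun x : ZMod n × ZMod n × ZMod n =>
      x.1.val < x.2.1.val ∧ x.2.1.val < x.2.2.val ∧
      IsSide τ s(x.1, x.2.1) ∧ IsSide τ s(x.2.1, x.2.2) ∧ IsSide τ s(x.1, x.2.2)).val.bind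
    fun x =>
      {EuclideanGeometry.angle (p x.2.1) (p x.1) (p x.2.2),
       EuclideanGeometry.angle (p x.1) (p x.2.1) (p x.2.2),
       EuclideanGeometry.angle (p x.1) (p x.2.2) (p x.2.1)}).sort (· ≤ ·)

/-- `τ` is angle maximal: it is a triangulation whose sorted list of angles is
greatest in the lexicographic order among all triangulations. -/
def AngleMaximal (p : ZMod n → EuclideanSpace ℝ (Fin 2))
    (τ : Finset (Sym2 (ZMod n))) : Prop :=
  IsTriangulation τ ∧
    ∀ τ' : Finset (Sym2 (ZMod n)), IsTriangulation τ' →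
      lexLE (sortedAngles p τ') (sortedAngles p τ)

/-- The ear `e_i = {i-1, i+1}`. -/
def ear (i : ZMod n) : Sym2 (ZMod n) := s(i - 1, i + 1)

/-- `P` contains a symmetric quadruple: indices `i < j < k < l` with
`‖p i - p k‖ = ‖p j - p l‖`. -/
def HasSymQuad (p : ZMod n → EuclideanSpace ℝ (Fin 2)) : Prop :=
  ∃ i j k l : ZMod n, i.val < j.val ∧ j.val < k.val ∧ k.val < l.val ∧
    ‖p i - p k‖ = ‖p j - p l‖

/-! ### Periodic families of diagonals -/

/-- The pairs `a < b` of the fundamental window `[0, N)` that are related by `E`. -/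
noncomputable def Win (N : ℤ) (E : ℤ → ℤ → Prop) : Finset (ℤ × ℤ) :=
  open Classical in
  ((Finset.Ico 0 N) ×ˢ (Finset.Ico 0 N)).filter fun p => p.1 < p.2 ∧ E p.1 p.2

/-- A family of pairwise non-crossing diagonals of the `N`-gon, as an `N`-periodic relation on `ℤ`:
vertices are indexed by integers modulo `N`, and the diagonal joining `a` and `b`, where
`a + 2 ≤ b ≤ a + N - 2`, is recorded both as `E a b` and as `E b (a + N)`. -/
structure PreTri (N : ℤ) (E : ℤ → ℤ → Prop) : Prop where
  lo : ∀ {a b}, E a b → a + 2 ≤ b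
  hi : ∀ {a b}, E a b → b + 2 ≤ a + N
  per : ∀ {a b}, E a b ↔ E b (a + N)
  nc : ∀ {a b c d}, E a b → E c d → a < c → c < b → b < d → d < a + N → False

/-- A triangulation of the `N`-gon: a non-crossing family of exactly `N - 3` diagonals. -/
structure Tri (N : ℤ) (E : ℤ → ℤ → Prop) : Prop extends PreTri N E where
  card : ((Win N E).card : ℤ) = N - 3

theorem mem_Win {N : ℤ} {E : ℤ → ℤ → Prop} {p : ℤ × ℤ} :
    p ∈ Win N E ↔ 0 ≤ p.1 ∧ p.1 < p.2 ∧ p.2 < N ∧ E p.1 p.2 := by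
  simp only [Win, Finset.mem_filter, Finset.mem_product, Finset.mem_Ico]
  constructor
  · rintro ⟨⟨⟨h1, h2⟩, h3, h4⟩, h5, h6⟩; exact ⟨h1, h5, h4, h6⟩
  · rintro ⟨h1, h5, h4, h6⟩; exact ⟨⟨⟨h1, by omega⟩, by omega, h4⟩, h5, h6⟩

/-- At most `y - x - 1` segments of length at least two in `[x, y]` are pairwise non-crossing; the
bound counts the segment `(x, y)` itself. -/
theorem card_noncrossing_le (k : ℕ) : ∀ (x y : ℤ) (S : Finset (ℤ × ℤ)), x < y → y - x ≤ k →
    (∀ p ∈ S, x ≤ p.1 ∧ p.1 + 2 ≤ p.2 ∧ p.2 ≤ y) →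
    (∀ p ∈ S, ∀ q ∈ S, p.1 < q.1 → q.1 < p.2 → p.2 < q.2 → False) →
    (S.card : ℤ) ≤ y - x - 1 := by
  induction k with
  | zero => intro x y S h1 h2; push_cast at h2; omega
  | succ k ih =>
    intro x y S hxy hk hS hnc
    by_cases hy : y = x + 1
    · have : S = ∅ := by
        apply Finset.eq_empty_of_forall_notMem
        intro p hp
        have := hS p hp
        omega
      subst this
      simp
      omega
    push_cast at hk
    obtain ⟨b, ⟨hb1, hb2, hb3⟩, hmax⟩ := Int.exists_greatest_of_bdd
      (P := fun b => x < b ∧ b < y ∧ (b = x + 1 ∨ (x, b) ∈ S))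
      ⟨y, fun z hz => hz.2.1.le⟩ ⟨x + 1, by omega, by omega, Or.inl rfl⟩
    have hsub : S ⊆ insert (x, y) (S.filter (fun p => p.2 ≤ b) ∪ S.filter (fun p => b ≤ p.1)) := by
      rintro ⟨c, d⟩ hp
      have h0 := hS _ hp
      simp only [Finset.mem_insert, Finset.mem_union, Finset.mem_filter, Prod.mk.injEq, hp,
        true_and]
      by_contra! hcon
      obtain ⟨h1, h2, h3⟩ := hcon
      dsimp only at h0
      rcases eq_or_ne c x with rfl | hc
      · have := hmax d ⟨by omega, by have := h1 rfl; omega, Or.inr hp⟩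
        omega
      · rcases hb3 with hb3 | hb3
        · omega
        · exact hnc _ hb3 _ hp (by dsimp only; omega) (by dsimp only; omega) (by dsimp only; omega)
    have hA := ih x b (S.filter (fun p => p.2 ≤ b)) hb1 (by omega)
      (fun p hp => by
        have := hS p (Finset.mem_filter.1 hp).1
        have := (Finset.mem_filter.1 hp).2
        omega)
      (fun p hp q hq => hnc p (Finset.mem_filter.1 hp).1 q (Finset.mem_filter.1 hq).1)
    have hB := ih b y (S.filter (fun p => b ≤ p.1)) hb2 (by omega)
      (fun p hp => by
        have := hS p (Finset.mem_filter.1 hp).1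
        have := (Finset.mem_filter.1 hp).2
        omega)
      (fun p hp q hq => hnc p (Finset.mem_filter.1 hp).1 q (Finset.mem_filter.1 hq).1)
    have h1 := Finset.card_le_card hsub
    have h2 := Finset.card_insert_le (x, y)
      (S.filter (fun p => p.2 ≤ b) ∪ S.filter (fun p => b ≤ p.1))
    have h3 := Finset.card_union_le (S.filter (fun p => p.2 ≤ b)) (S.filter (fun p => b ≤ p.1))
    omega

/-! ### Rotations -/

/-- The relation `E` after relabelling the vertices, vertex `k` becoming vertex `0`. -/
def rot (k : ℤ) (E : ℤ → ℤ → Prop) : ℤ → ℤ → Prop := fun a b => E (a + k) (b + k)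

theorem sum_Win_rot_one {α : Type*} [AddCommMonoid α] {N : ℤ} {E : ℤ → ℤ → Prop}
    (hE : ∀ {a b}, E a b ↔ E b (a + N)) (F : ℤ → ℤ → α)
    (hF : ∀ a b, F a b = F b (a + N)) :
    ∑ p ∈ Win N (rot 1 E), F (p.1 + 1) (p.2 + 1) = ∑ p ∈ Win N E, F p.1 p.2 := by
  refine Finset.sum_bij' (fun p _ => if p.2 + 1 < N then (p.1 + 1, p.2 + 1) else (0, p.1 + 1))
    (fun p _ => if 0 < p.1 then (p.1 - 1, p.2 - 1) else (p.2 - 1, N - 1)) ?_ ?_ ?_ ?_ ?_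
  · rintro ⟨a, b⟩ hp
    rw [mem_Win] at hp
    dsimp only [rot] at hp
    obtain ⟨h1, h2, h3, h4⟩ := hp
    split_ifs with h
    · rw [mem_Win]; exact ⟨by dsimp only; omega, by dsimp only; omega, h, h4⟩
    · rw [mem_Win]
      refine ⟨le_rfl, by dsimp only; omega, by dsimp only; omega, ?_⟩
      dsimp only at h ⊢
      rw [hE, show (0:ℤ) + N = b + 1 by omega]; exact h4
  · rintro ⟨a, b⟩ hp
    rw [mem_Win] at hp
    dsimp only at hp
    obtain ⟨h1, h2, h3, h4⟩ := hp
    split_ifs with h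
    · rw [mem_Win]; refine ⟨by dsimp only at *; omega, by dsimp only; omega, by dsimp only; omega, ?_⟩
      simpa [rot] using h4
    · rw [mem_Win]
      dsimp only at h ⊢
      refine ⟨by omega, by omega, by omega, ?_⟩
      rw [hE, show a + N = N by omega] at h4
      simpa [rot] using h4
  · rintro ⟨a, b⟩ hp
    rw [mem_Win] at hp
    dsimp only at hp
    by_cases h : b + 1 < N
    · simp only [h, if_true]
      rw [if_pos (by omega)]; simp
    · simp only [h, if_false]
      simp; omega
  · rintro ⟨a, b⟩ hp
    rw [mem_Win] at hp
    dsimp only at hp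
    by_cases h : 0 < a
    · simp only [h, if_true]
      rw [if_pos (by omega)]; simp
    · simp only [h, if_false]
      simp; omega
  · rintro ⟨a, b⟩ hp
    rw [mem_Win] at hp
    dsimp only at hp ⊢
    split_ifs with h
    · rfl
    · rw [hF 0, show (0:ℤ) + N = b + 1 by omega]

/-- The sum of a symmetric function over the diagonals does not depend on the fundamental window
used to list them. -/
theorem sum_Win_rot {α : Type*} [AddCommMonoid α] {N : ℤ} {E : ℤ → ℤ → Prop}
    (hE : ∀ {a b}, E a b ↔ E b (a + N)) (F : ℤ → ℤ → α)
    (hF : ∀ a b, F a b = F b (a + N)) (k : ℤ) :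
    ∑ p ∈ Win N (rot k E), F (p.1 + k) (p.2 + k) = ∑ p ∈ Win N E, F p.1 p.2 := by
  have key : ∀ k : ℤ, ∑ p ∈ Win N (rot (k + 1) E), F (p.1 + (k + 1)) (p.2 + (k + 1)) =
      ∑ p ∈ Win N (rot k E), F (p.1 + k) (p.2 + k) := by
    intro k
    have := sum_Win_rot_one (N := N) (E := rot k E)
      (by intro a b; unfold rot; rw [hE]; ring_nf) (fun a b => F (a + k) (b + k))
      (by intro a b; rw [hF]; ring_nf)
    rw [← this]
    have e : rot (k + 1) E = rot 1 (rot k E) := by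
      funext a b; unfold rot; ring_nf
    rw [e]
    refine Finset.sum_congr rfl fun p _ => ?_
    ring_nf
  induction k with
  | zero =>
    have : rot 0 E = E := by funext a b; simp [rot]
    simp [this]
  | succ k ih => rw [key, ih]
  | pred k ih => rw [← ih, ← key]; norm_num

theorem PreTri.rot {N : ℤ} {E : ℤ → ℤ → Prop} (h : PreTri N E) (k : ℤ) : PreTri N (rot k E) where
  lo := fun hab => by have := h.lo hab; omega
  hi := fun hab => by have := h.hi hab; omega
  per := by intro a b; unfold _root_.rot; rw [h.per]; ring_nf
  nc := fun h1 h2 _ _ _ _ => h.nc h1 h2 (by omega) (by omega) (by omega) (by omega)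

theorem Tri.rot {N : ℤ} {E : ℤ → ℤ → Prop} (h : Tri N E) (k : ℤ) : Tri N (rot k E) where
  toPreTri := h.toPreTri.rot k
  card := by
    have := sum_Win_rot (E := E) (fun {a b} => h.per (a := a) (b := b))
      (fun _ _ => (1 : ℕ)) (fun _ _ => rfl) k
    simp at this
    rw [this, h.card]

/-! ### Apexes and ears -/

/-- A side of the triangulation: an edge of the polygon or a diagonal. -/
def Side (N : ℤ) (E : ℤ → ℤ → Prop) (a b : ℤ) : Prop := b = a + 1 ∨ E a b ∨ b + 1 = a + N

theorem side_rot {N : ℤ} {E : ℤ → ℤ → Prop} (k a b : ℤ) :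
    Side N (rot k E) a b ↔ Side N E (a + k) (b + k) := by
  unfold Side rot
  refine or_congr ?_ (or_congr Iff.rfl ?_) <;> omega

/-- The third vertex of the triangle lying on the side `{a, b}`, on the side of the vertices between
`a` and `b`. -/
theorem Tri.apex {N : ℤ} {E : ℤ → ℤ → Prop} (h : Tri N E) {a b : ℤ} (hab : a + 2 ≤ b)
    (hs : Side N E a b) : ∃ c, a < c ∧ c < b ∧ Side N E a c ∧ Side N E c b := by
  -- rotate `a` to `0`
  wlog ha : a = 0 generalizing a b E
  · obtain ⟨c, h1, h2, h3, h4⟩ := this (h.rot a) (a := 0) (b := b - a) (by omega)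
      (by rw [side_rot]; simpa using hs) rfl
    rw [side_rot] at h3 h4
    exact ⟨c + a, by omega, by omega, by simpa using h3, by simpa using h4⟩
  subst ha
  have hbN : b < N := by
    rcases hs with h' | h' | h'
    · omega
    · have := h.hi h'; omega
    · omega
  obtain ⟨c, ⟨hc1, hc2, hc3⟩, hmax⟩ := Int.exists_greatest_of_bdd
    (P := fun c => 0 < c ∧ c < b ∧ (c = 1 ∨ E 0 c))
    ⟨b, fun z hz => hz.2.1.le⟩ ⟨1, by omega, by omega, Or.inl rfl⟩
  refine ⟨c, hc1, hc2, hc3.imp (by omega) Or.inl, ?_⟩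
  by_contra hcb
  simp only [Side, not_or] at hcb
  obtain ⟨hcb1, hcb2, hcb3⟩ := hcb
  -- otherwise `{c, b}` could be added to the triangulation
  have hbound := card_noncrossing_le (N - 1).toNat 0 (N - 1)
    (insert (0, N - 1) (insert (c, b) (Win N E))) (by omega) (by omega) ?_ ?_
  · rw [Finset.card_insert_of_notMem, Finset.card_insert_of_notMem] at hbound
    · have := h.card
      push_cast at hbound
      omega
    · rw [mem_Win]; exact fun h' => hcb2 h'.2.2.2
    · simp only [Finset.mem_insert, Prod.mk.injEq, mem_Win, not_or]
      refine ⟨by omega, fun h' => ?_⟩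
      have := h.hi h'.2.2.2
      omega
  · intro p hp
    simp only [Finset.mem_insert, mem_Win] at hp
    rcases hp with rfl | rfl | hp
    · dsimp only; omega
    · dsimp only; omega
    · have := h.lo hp.2.2.2
      omega
  · have hE0b : ∀ u v, u < b → b < v → v < N → 0 < u → E u v → False := by
      intro u v h1 h2 h3 h4 h5
      rcases hs with h' | h' | h'
      · omega
      · exact h.nc h' h5 h4 h1 h2 (by omega)
      · omega
    have hE0c : ∀ u v, 0 ≤ u → u < c → c < v → v < b → E u v → False := by
      intro u v h1 h2 h3 h4 h5
      rcases eq_or_ne u 0 with rfl | hu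
      · have := hmax v ⟨by omega, h4, Or.inr h5⟩
        omega
      · rcases hc3 with h' | h'
        · omega
        · exact h.nc h' h5 (by omega) h2 h3 (by omega)
    rintro ⟨u, v⟩ hp ⟨x, y⟩ hq h1 h2 h3
    simp only [Finset.mem_insert, mem_Win, Prod.mk.injEq] at hp hq
    dsimp only at *
    rcases hp with hp | hp | hp <;> rcases hq with hq | hq | hq
    any_goals omega
    · exact hE0b x y (by omega) (by omega) (by omega) (by omega) hq.2.2.2
    · exact hE0c u v (by omega) (by omega) (by omega) (by omega) hp.2.2.2
    · exact h.nc hp.2.2.2 hq.2.2.2 h1 h2 h3 (by omega)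

/-- `k` is the tip of an ear of the triangulation. -/
def Ear (E : ℤ → ℤ → Prop) (k : ℤ) : Prop := E (k - 1) (k + 1)

/-- Both sides of a diagonal contain the tip of an ear. -/
theorem Tri.exists_ear {N : ℤ} {E : ℤ → ℤ → Prop} (h : Tri N E) {a b : ℤ} (hab : E a b) :
    ∃ k, a < k ∧ k < b ∧ Ear E k := by
  have key : ∀ n : ℕ, ∀ a b : ℤ, b - a ≤ n → E a b → ∃ k, a < k ∧ k < b ∧ Ear E k := by
    intro n
    induction n with
    | zero => intro a b h1 h2; have := h.lo h2; push_cast at h1; omega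
    | succ n ih =>
      intro a b h1 h2
      have hlo := h.lo h2
      have hhi := h.hi h2
      obtain ⟨c, h3, h4, h5, h6⟩ := h.apex hlo (Or.inr (Or.inl h2))
      push_cast at h1
      rcases h5 with h5 | h5 | h5
      · rcases h6 with h6 | h6 | h6
        · refine ⟨c, h3, h4, ?_⟩
          unfold Ear
          rwa [h5, show a + 1 - 1 = a by ring, ← h5, ← h6]
        · obtain ⟨k, hk⟩ := ih c b (by omega) h6
          exact ⟨k, by omega, by omega, hk.2.2⟩
        · omega
      · obtain ⟨k, hk⟩ := ih a c (by omega) h5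
        exact ⟨k, by omega, by omega, hk.2.2⟩
      · omega
  exact key (b - a).toNat a b (by omega) hab

theorem PreTri.shift {N : ℤ} {E : ℤ → ℤ → Prop} (h : PreTri N E) {a b : ℤ} :
    E (a + N) (b + N) ↔ E a b := by
  rw [← h.per, ← h.per]

theorem PreTri.shift_mul {N : ℤ} {E : ℤ → ℤ → Prop} (h : PreTri N E) (k : ℤ) : ∀ {a b : ℤ},
    E (a + N * k) (b + N * k) ↔ E a b := by
  induction k with
  | zero => simp
  | succ k ih =>
    intro a b
    rw [← ih (a := a) (b := b), ← h.shift (a := a + N * k)]; ring_nf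
  | pred k ih =>
    intro a b
    rw [← ih (a := a), ← h.shift (a := a + N * (-k - 1))]; ring_nf

theorem PreTri.ear_shift {N : ℤ} {E : ℤ → ℤ → Prop} (h : PreTri N E) (k j : ℤ) :
    Ear E (j + N * k) ↔ Ear E j := by
  unfold Ear
  rw [← h.shift_mul k (a := j - 1)]; ring_nf

/-- No diagonal of a non-crossing family ends at the tip of one of its ears. -/
theorem PreTri.tip {N : ℤ} {E : ℤ → ℤ → Prop} (h : PreTri N E) {k b : ℤ} (hk : Ear E k) :
    ¬ E k b := fun hb => by
  have := h.lo hb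
  have := h.hi hb
  exact h.nc hk hb (by omega) (by omega) (by omega) (by omega)

theorem PreTri.tip' {N : ℤ} {E : ℤ → ℤ → Prop} (h : PreTri N E) {k a : ℤ} (hk : Ear E k) :
    ¬ E a k := fun hb => by
  rw [h.per] at hb
  exact h.tip hk hb

/-! ### Comparison of sorted lists -/

/-- Strict lexicographic comparison of the sorted lists of two multisets, in terms of
multiplicities: at the first value whose multiplicities differ, `M` has more copies. -/
def SLt (M M' : Multiset ℝ) : Prop :=
  ∃ x, (∀ y < x, M.count y = M'.count y) ∧ M'.count x < M.count x

theorem SLt.asymm {M M' : Multiset ℝ} (h : SLt M M') : ¬ SLt M' M := by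
  rintro ⟨x', h1', h2'⟩
  obtain ⟨x, h1, h2⟩ := h
  rcases lt_trichotomy x x' with h | rfl | h
  · have := h1' x h; omega
  · omega
  · have := h1 x' h; omega

theorem SLt.trichotomy (M M' : Multiset ℝ) : SLt M M' ∨ M = M' ∨ SLt M' M := by
  by_cases hne : M = M'
  · exact Or.inr (Or.inl hne)
  have hex : ((M.toFinset ∪ M'.toFinset).filter fun x => M.count x ≠ M'.count x).Nonempty := by
    by_contra hcon
    rw [Finset.not_nonempty_iff_eq_empty] at hcon
    apply hne
    ext x
    by_contra hx
    have : x ∈ (M.toFinset ∪ M'.toFinset).filter fun x => M.count x ≠ M'.count x := by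
      simp only [Finset.mem_filter, Finset.mem_union, Multiset.mem_toFinset]
      refine ⟨?_, hx⟩
      by_contra! h
      exact hx (by rw [Multiset.count_eq_zero_of_notMem h.1, Multiset.count_eq_zero_of_notMem h.2])
    rw [hcon] at this
    simp at this
  obtain ⟨x, hx, hmin⟩ := Finset.exists_min_image _ id hex
  have hlt : ∀ y < x, M.count y = M'.count y := by
    intro y hy
    by_contra h
    have : y ∈ (M.toFinset ∪ M'.toFinset).filter fun x => M.count x ≠ M'.count x := by
      simp only [Finset.mem_filter, Finset.mem_union, Multiset.mem_toFinset]
      refine ⟨?_, h⟩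
      by_contra! h'
      exact h (by rw [Multiset.count_eq_zero_of_notMem h'.1, Multiset.count_eq_zero_of_notMem h'.2])
    exact absurd (hmin y this) (not_le.2 hy)
  have hx' := (Finset.mem_filter.1 hx).2
  rcases lt_or_gt_of_ne hx' with h | h
  · exact Or.inr (Or.inr ⟨x, fun y hy => (hlt y hy).symm, h⟩)
  · exact Or.inl ⟨x, hlt, h⟩

theorem sLt_of_forall_lt {R R' : Multiset ℝ} {s : ℝ} (hs : s ∈ R') (h : ∀ x ∈ R, s < x) :
    SLt R' R := by
  rcases SLt.trichotomy R' R with h' | rfl | ⟨x, h1, h2⟩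
  · exact h'
  · exact absurd (h s hs) (lt_irrefl _)
  · have hx : x ∈ R := Multiset.count_pos.1 (by omega)
    have := h1 s (h x hx)
    have hs' := Multiset.count_pos.2 hs
    exact absurd (h s (Multiset.count_pos.1 (by omega))) (lt_irrefl _)

theorem SLt.add_left {M M' : Multiset ℝ} (C : Multiset ℝ) (h : SLt M M') :
    SLt (C + M) (C + M') := by
  obtain ⟨x, h1, h2⟩ := h
  refine ⟨x, fun y hy => ?_, ?_⟩
  · simp [Multiset.count_add, h1 y hy]
  · simp only [Multiset.count_add]; omega

theorem SLt.cons {M M' : Multiset ℝ} (c : ℝ) (h : SLt M M') : SLt (c ::ₘ M) (c ::ₘ M') := by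
  simpa using h.add_left {c}

theorem sLt_cons_iff {M M' : Multiset ℝ} (c : ℝ) : SLt (c ::ₘ M) (c ::ₘ M') ↔ SLt M M' := by
  refine ⟨fun h => ?_, SLt.cons c⟩
  rcases SLt.trichotomy M M' with h' | rfl | h'
  · exact h'
  · exact absurd h h.asymm
  · exact absurd h (h'.cons c).asymm

theorem count_map_of_strictMonoOn {f : ℝ → ℝ} {s : Set ℝ} (hf : StrictMonoOn f s)
    {M : Multiset ℝ} (hM : ∀ x ∈ M, x ∈ s) {x : ℝ} (hx : x ∈ s) :
    (M.map f).count (f x) = M.count x := by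
  by_cases hxM : x ∈ M
  · exact Multiset.count_map_eq_count f M (fun a ha b hb => hf.injOn (hM a ha) (hM b hb)) x hxM
  · rw [Multiset.count_eq_zero_of_notMem hxM, Multiset.count_eq_zero]
    intro h
    obtain ⟨y, hy, hyx⟩ := Multiset.mem_map.1 h
    exact hxM (hf.injOn (hM y hy) hx hyx ▸ hy)

theorem SLt.map {f : ℝ → ℝ} {s : Set ℝ} (hf : StrictMonoOn f s) {M M' : Multiset ℝ}
    (hM : ∀ x ∈ M, x ∈ s) (hM' : ∀ x ∈ M', x ∈ s) (h : SLt M M') :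
    SLt (M.map f) (M'.map f) := by
  obtain ⟨x, h1, h2⟩ := h
  have hx : x ∈ s := hM x (Multiset.count_pos.1 (by omega))
  refine ⟨f x, fun y hy => ?_, ?_⟩
  · by_cases hys : ∃ z ∈ s, f z = y
    · obtain ⟨z, hz, rfl⟩ := hys
      rw [count_map_of_strictMonoOn hf hM hz, count_map_of_strictMonoOn hf hM' hz]
      exact h1 z ((hf.lt_iff_lt hz hx).1 hy)
    · rw [Multiset.count_eq_zero.2, Multiset.count_eq_zero.2]
      · intro h
        obtain ⟨z, hz, hzy⟩ := Multiset.mem_map.1 h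
        exact hys ⟨z, hM' z hz, hzy⟩
      · intro h
        obtain ⟨z, hz, hzy⟩ := Multiset.mem_map.1 h
        exact hys ⟨z, hM z hz, hzy⟩
  · rw [count_map_of_strictMonoOn hf hM hx, count_map_of_strictMonoOn hf hM' hx]
    exact h2

/-- Adjoining to every `x` its reflection `c - x` does not affect the comparison when all
elements are at most `c / 2`. -/
theorem SLt.add_reflect {c : ℝ} {M M' : Multiset ℝ}
    (hM : ∀ x ∈ M, x ≤ c / 2) (hM' : ∀ x ∈ M', x ≤ c / 2) (h : SLt M M') :
    SLt (M + M.map (fun x => c - x)) (M' + M'.map (fun x => c - x)) := by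
  obtain ⟨x, h1, h2⟩ := h
  have hx : x ≤ c / 2 := hM x (Multiset.count_pos.1 (by omega))
  have hr : ∀ (K : Multiset ℝ) (y : ℝ), (K.map (fun x => c - x)).count y = K.count (c - y) := by
    intro K y
    conv_lhs => rw [show y = c - (c - y) by ring]
    exact Multiset.count_map_eq_count' (fun x => c - x) K (sub_right_injective) (c - y)
  refine ⟨x, fun y hy => ?_, ?_⟩
  · have e1 : M.count (c - y) = 0 := Multiset.count_eq_zero.2 fun h => by linarith [hM _ h]
    have e2 : M'.count (c - y) = 0 := Multiset.count_eq_zero.2 fun h => by linarith [hM' _ h]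
    rw [Multiset.count_add, Multiset.count_add, hr, hr, h1 y hy, e1, e2]
  · rw [Multiset.count_add, Multiset.count_add, hr, hr]
    rcases hx.lt_or_eq with hx | hx
    · have e1 : M.count (c - x) = 0 := Multiset.count_eq_zero.2 fun h => by linarith [hM _ h]
      have e2 : M'.count (c - x) = 0 := Multiset.count_eq_zero.2 fun h => by linarith [hM' _ h]
      omega
    · rw [show c - x = x by linarith]; omega

theorem sLt_of_lex {l l' : List ℝ} (h : List.Lex (· < ·) l l') (hlen : l.length = l'.length)
    (hl : l.Pairwise (· ≤ ·)) (hl' : l'.Pairwise (· ≤ ·)) :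
    SLt (l : Multiset ℝ) (l' : Multiset ℝ) := by
  induction h with
  | nil => simp at hlen
  | cons h ih =>
    rw [← Multiset.cons_coe, ← Multiset.cons_coe]
    exact (ih (by simpa using hlen) (List.pairwise_cons.1 hl).2
      (List.pairwise_cons.1 hl').2).cons _
  | @rel a as b bs hab =>
    apply sLt_of_forall_lt (s := a) (by simp)
    intro x hx
    rw [Multiset.mem_coe, List.mem_cons] at hx
    rcases hx with rfl | hx
    · exact hab
    · exact hab.trans_le ((List.pairwise_cons.1 hl').1 x hx)

theorem lex_trichotomy (l l' : List ℝ) :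
    List.Lex (· < ·) l l' ∨ l = l' ∨ List.Lex (· < ·) l' l := lt_trichotomy l l'

theorem lex_sort_iff {M M' : Multiset ℝ} (hc : M.card = M'.card) :
    (M.sort (· ≤ ·) = M'.sort (· ≤ ·) ∨
      List.Lex (· < ·) (M.sort (· ≤ ·)) (M'.sort (· ≤ ·))) ↔ ¬ SLt M' M := by
  have key : ∀ {M M' : Multiset ℝ}, M.card = M'.card →
      List.Lex (· < ·) (M.sort (· ≤ ·)) (M'.sort (· ≤ ·)) → SLt M M' := by
    intro M M' hc h
    have := sLt_of_lex h (by simp [hc]) (Multiset.pairwise_sort M (· ≤ ·)) (Multiset.pairwise_sort M' (· ≤ ·))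
    simpa using this
  constructor
  · rintro (h | h) h'
    · have : M = M' := by
        rw [← Multiset.sort_eq M (· ≤ ·), h, Multiset.sort_eq]
      subst this
      exact h'.asymm h'
    · exact (key hc h).asymm h'
  · intro h
    rcases lex_trichotomy (M.sort (· ≤ ·)) (M'.sort (· ≤ ·)) with h' | h' | h'
    · exact Or.inr h'
    · exact Or.inl h'
    · exact absurd (key hc.symm h') h

/-! ### Points on the circle -/

/-- Half-angles of points on the circle, lifted to a quasi-periodic sequence: `t k` is half the
polar angle of the `k`-th point, so that the segment joining the `a`-th and `b`-th points has
length `2 * sin (t b - t a)` when `a < b < a + N`. Crossing segments have distinct lengths. -/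
structure Circ (N : ℤ) (t : ℤ → ℝ) : Prop where
  mono : StrictMono t
  per : ∀ k, t (k + N) = t k + Real.pi
  gen : ∀ a b c d, a < b → b < c → c < d → d < a + N →
    Real.sin (t c - t a) ≠ Real.sin (t d - t b)

/-- The half-lengths of the diagonals of a triangulation. -/
noncomputable def lens (N : ℤ) (t : ℤ → ℝ) (E : ℤ → ℤ → Prop) : Multiset ℝ :=
  (Win N E).val.map fun p => Real.sin (t p.2 - t p.1)

theorem Circ.sin_swap {N : ℤ} {t : ℤ → ℝ} (ht : Circ N t) (a b : ℤ) :
    Real.sin (t (a + N) - t b) = Real.sin (t b - t a) := by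
  rw [ht.per, ← Real.sin_pi_sub]; ring_nf

theorem Circ.shift_mul {N : ℤ} {t : ℤ → ℝ} (ht : Circ N t) (k : ℤ) (a : ℤ) :
    t (a + N * k) = t a + k * Real.pi := by
  induction k with
  | zero => simp
  | succ k ih =>
    rw [show a + N * ((k : ℤ) + 1) = (a + N * k) + N by ring, ht.per, ih]; push_cast; ring
  | pred k ih =>
    have := ht.per (a + N * (-(k : ℤ) - 1))
    rw [show a + N * (-(k : ℤ) - 1) + N = a + N * (-k) by ring, ih] at this
    push_cast at *; linarith

/-- Every diagonal has a representative in the window starting at `c`. -/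
theorem PreTri.normalize {N : ℤ} {E : ℤ → ℤ → Prop} (h : PreTri N E) (hN : 0 < N) {t : ℤ → ℝ}
    (ht : Circ N t) (c : ℤ) {a b : ℤ} (hab : E a b) :
    ∃ a' b', c ≤ a' ∧ a' < b' ∧ b' < c + N ∧ E a' b' ∧
      Real.sin (t b' - t a') = Real.sin (t b - t a) := by
  have h1 := Int.emod_nonneg (a - c) hN.ne'
  have h2 := Int.emod_lt_of_pos (a - c) hN
  have h3 := Int.emod_add_mul_ediv (a - c) N
  set k := (a - c) / N
  have hE : E (a + N * (-k)) (b + N * (-k)) := (h.shift_mul _).2 hab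
  have hs : Real.sin (t (b + N * (-k)) - t (a + N * (-k))) = Real.sin (t b - t a) := by
    rw [ht.shift_mul, ht.shift_mul]; ring_nf
  have hlo := h.lo hE
  have hhi := h.hi hE
  have e : N * (-k) = -(N * k) := by ring
  by_cases hb : b + N * (-k) < c + N
  · exact ⟨a + N * (-k), b + N * (-k), by omega, by omega, hb, hE, hs⟩
  · refine ⟨b + N * (-k) - N, a + N * (-k), by omega, by omega, by omega, ?_, ?_⟩
    · rw [h.per]; simpa using hE
    · rw [← hs, ← ht.sin_swap]; simp

theorem mem_lens {N : ℤ} {E : ℤ → ℤ → Prop} (h : PreTri N E) (hN : 0 < N) {t : ℤ → ℝ}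
    (ht : Circ N t) {x : ℝ} :
    x ∈ lens N t E ↔ ∃ a b, E a b ∧ Real.sin (t b - t a) = x := by
  unfold lens
  rw [Multiset.mem_map]
  constructor
  · rintro ⟨p, hp, rfl⟩
    exact ⟨p.1, p.2, (mem_Win.1 hp).2.2.2, rfl⟩
  · rintro ⟨a, b, hab, rfl⟩
    obtain ⟨a', b', h1, h2, h3, h4, h5⟩ := h.normalize hN ht 0 hab
    exact ⟨(a', b'), mem_Win.2 ⟨h1, h2, by simpa using h3, h4⟩, h5⟩

theorem sum_singleton_Win (N : ℤ) (E : ℤ → ℤ → Prop) (f : ℤ × ℤ → ℝ) :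
    ∑ p ∈ Win N E, ({f p} : Multiset ℝ) = (Win N E).val.map f := by
  rw [Finset.sum_eq_multiset_sum, ← Multiset.sum_map_singleton ((Win N E).val.map f),
    Multiset.map_map]
  rfl

theorem lens_rot {N : ℤ} {E : ℤ → ℤ → Prop} (h : PreTri N E) {t : ℤ → ℝ}
    (ht : Circ N t) (k : ℤ) : lens N t (rot k E) = lens N (fun j => t (j - k)) E := by
  unfold lens
  rw [← sum_singleton_Win, ← sum_singleton_Win,
    ← sum_Win_rot (N := N) (E := E) (fun {a b} => h.per (a := a) (b := b))
      (fun a b => {Real.sin (t (b - k) - t (a - k))}) _ k]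
  · simp
  · intro a b
    rw [← ht.sin_swap, show a + N - k = a - k + N by ring]

theorem Circ.translate {N : ℤ} {t : ℤ → ℝ} (ht : Circ N t) (k : ℤ) :
    Circ N (fun j => t (j - k)) where
  mono := fun a b hab => ht.mono (by omega)
  per := fun j => by rw [show j + N - k = j - k + N by ring, ht.per]
  gen := fun a b c d h1 h2 h3 h4 =>
    ht.gen _ _ _ _ (by omega) (by omega) (by omega) (by omega)

theorem min_sin_le {A Y B : ℝ} (hA : 0 < A) (hB : 0 < B) (h1 : A ≤ Y) (h2 : Y ≤ Real.pi - B) :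
    min (Real.sin A) (Real.sin B) ≤ Real.sin Y := by
  rcases le_total Y (Real.pi / 2) with h | h
  · exact (min_le_left _ _).trans
      (Real.sin_le_sin_of_le_of_le_pi_div_two (by linarith [Real.pi_pos]) h h1)
  · refine (min_le_right _ _).trans ?_
    rw [← Real.sin_pi_sub Y]
    exact Real.sin_le_sin_of_le_of_le_pi_div_two (by linarith [Real.pi_pos]) (by linarith)
      (by linarith)

theorem min_sin_lt {A Y B : ℝ} (hA : 0 < A) (hB : 0 < B) (h1 : A < Y) (h2 : Y < Real.pi - B) :
    min (Real.sin A) (Real.sin B) < Real.sin Y := by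
  rcases le_total Y (Real.pi / 2) with h | h
  · exact (min_le_left _ _).trans_lt
      (Real.sin_lt_sin_of_lt_of_le_pi_div_two (by linarith [Real.pi_pos]) h h1)
  · refine (min_le_right _ _).trans_lt ?_
    rw [← Real.sin_pi_sub Y]
    exact Real.sin_lt_sin_of_lt_of_le_pi_div_two (by linarith [Real.pi_pos]) (by linarith)
      (by linarith)

theorem eq_of_sin_eq {x y : ℝ} (hx : 0 < x) (hy : 0 < y) (hxy : x + y < Real.pi)
    (h : Real.sin x = Real.sin y) : x = y := by
  rcases lt_trichotomy x y with h' | h' | h'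
  · have := min_sin_lt hx hx h' (by linarith)
    rw [min_self] at this; linarith
  · exact h'
  · have := min_sin_lt hy hy h' (by linarith)
    rw [min_self] at this; linarith

/-- Disjoint segments have distinct lengths as well: two disjoint segments of the same length are
the legs of an isosceles trapezoid, whose diagonals are crossing segments of equal length. -/
theorem Circ.disj {N : ℤ} {t : ℤ → ℝ} (ht : Circ N t) {a b c d : ℤ} (h1 : a < b) (h2 : b < c)
    (h3 : c < d) (h4 : d < a + N) : Real.sin (t b - t a) ≠ Real.sin (t d - t c) := by
  intro h
  have e1 := ht.mono h1
  have e2 := ht.mono h2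
  have e3 := ht.mono h3
  have e4 := ht.mono h4
  rw [ht.per] at e4
  have := eq_of_sin_eq (by linarith) (by linarith) (by linarith) h
  exact ht.gen a b c d h1 h2 h3 h4 (by congr 1; linarith)

/-- Half the length of the diagonal that cuts off the vertex `k`. -/
noncomputable def earLen (t : ℤ → ℝ) (k : ℤ) : ℝ := Real.sin (t (k + 1) - t (k - 1))

theorem Circ.earLen_shift {N : ℤ} {t : ℤ → ℝ} (ht : Circ N t) (j k : ℤ) :
    earLen t (j + N * k) = earLen t j := by
  unfold earLen
  rw [show j + N * k + 1 = (j + 1) + N * k by ring, show j + N * k - 1 = (j - 1) + N * k by ring,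
    ht.shift_mul, ht.shift_mul]
  ring_nf

theorem Circ.earLen_add {N : ℤ} {t : ℤ → ℝ} (ht : Circ N t) (j : ℤ) :
    earLen t (j + N) = earLen t j := by
  simpa using ht.earLen_shift j 1

/-- A diagonal nested between two ears is at least as long as the shorter of the ears. -/
theorem Circ.min_le {N : ℤ} {t : ℤ → ℝ} (ht : Circ N t) {a b c d k : ℤ} (hcd : c < d)
    (h1 : a ≤ c) (h2 : d ≤ b) (h3 : b < k) (h4 : k < a + N) :
    min (Real.sin (t d - t c)) (earLen t k) ≤ Real.sin (t b - t a) := by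
  have e1 := ht.mono hcd
  have e2 := ht.mono.monotone h1
  have e3 := ht.mono.monotone h2
  have e4 := ht.mono.monotone (show b ≤ k - 1 by omega)
  have e5 := ht.mono.monotone (show k + 1 ≤ a + N by omega)
  have e6 := ht.mono (show k - 1 < k + 1 by omega)
  rw [ht.per] at e5
  exact min_sin_le (by linarith) (by linarith) (by linarith) (by linarith)

theorem Circ.earLen_ne_succ {N : ℤ} {t : ℤ → ℝ} (ht : Circ N t) (hN : 4 ≤ N) (k : ℤ) :
    earLen t k ≠ earLen t (k + 1) := by
  unfold earLen
  have := ht.gen (k - 1) k (k + 1) (k + 2) (by omega) (by omega) (by omega) (by omega)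
  rwa [show k + 1 + 1 = k + 2 by ring, show k + 1 - 1 = k by ring]

/-- Two different ears of the same length have tips at cyclic distance two. -/
theorem Circ.eq_ear {N : ℤ} {t : ℤ → ℝ} (ht : Circ N t) (hN : 4 ≤ N) {j k : ℤ} (h1 : j < k)
    (h2 : k < j + N) (h : earLen t j = earLen t k) : k = j + 2 ∨ k = j + N - 2 := by
  by_contra! hc
  rcases eq_or_ne k (j + 1) with rfl | h3
  · exact ht.earLen_ne_succ hN j h
  rcases eq_or_ne k (j + N - 1) with rfl | h4
  · rw [← ht.earLen_add] at h
    exact ht.earLen_ne_succ hN (j + N - 1) (by rw [← h]; congr 1; ring)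
  · exact ht.disj (a := j - 1) (b := j + 1) (c := k - 1) (d := k + 1) (by omega) (by omega)
      (by omega) (by omega) h

/-! ### Triangulations with two ears -/

/-- The periodic extension of a relation given on pairs `a < b` in the window `[0, N)`. -/
def ext (N : ℤ) (P : ℤ → ℤ → Prop) (a b : ℤ) : Prop :=
  a < b ∧ b < a + N ∧ P (min (a % N) (b % N)) (max (a % N) (b % N))

theorem mem_Win_ext {N : ℤ} {P : ℤ → ℤ → Prop} {p : ℤ × ℤ} :
    p ∈ Win N (ext N P) ↔ 0 ≤ p.1 ∧ p.1 < p.2 ∧ p.2 < N ∧ P p.1 p.2 := by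
  rw [mem_Win]
  refine and_congr_right fun h1 => and_congr_right fun h2 => and_congr_right fun h3 => ?_
  unfold ext
  rw [Int.emod_eq_of_lt h1 (by omega), Int.emod_eq_of_lt (by omega) h3, min_eq_left h2.le,
    max_eq_right h2.le]
  exact ⟨fun h => h.2.2, fun h => ⟨h2, by omega, h⟩⟩

theorem emod_cases {N k z : ℤ} (h1 : N * k ≤ z) (h2 : z < N * k + 2 * N) :
    (z < N * k + N ∧ z % N = z - N * k) ∨ (N * k + N ≤ z ∧ z % N = z - N * k - N) := by
  by_cases h : z < N * k + N
  · left
    refine ⟨h, ?_⟩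
    rw [show z = (z - N * k) + N * k by ring, Int.add_mul_emod_self_left,
      Int.emod_eq_of_lt (by omega) (by omega)]
    ring
  · right
    refine ⟨by omega, ?_⟩
    rw [show z = (z - N * k - N) + N * (k + 1) by ring, Int.add_mul_emod_self_left,
      Int.emod_eq_of_lt (by omega) (by omega)]
    ring

theorem preTri_ext {N : ℤ} (hN : 0 < N) {P : ℤ → ℤ → Prop}
    (hlo : ∀ x y, 0 ≤ x → x < y → y < N → P x y → x + 2 ≤ y ∧ y + 2 ≤ x + N)
    (hnc : ∀ x y z w, 0 ≤ x → x < y → y < z → z < w → w < N → P x z → P y w → False) :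
    PreTri N (ext N P) := by
  have hex : ∀ a : ℤ, ∃ k, N * k ≤ a ∧ a < N * k + N := fun a => by
    have h1 := Int.emod_nonneg a hN.ne'
    have h2 := Int.emod_lt_of_pos a hN
    have h3 := Int.emod_add_mul_ediv a N
    exact ⟨a / N, by omega, by omega⟩
  have hr : ∀ a b, ext N P a b → a + 2 ≤ b ∧ b + 2 ≤ a + N := by
    rintro a b ⟨h1, h2, h3⟩
    obtain ⟨k, hk1, hk2⟩ := hex a
    have := hlo _ _ ?_ ?_ ?_ h3
    · rcases emod_cases (N := N) (k := k) (z := a) (by omega) (by omega) with h | h <;>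
      rcases emod_cases (N := N) (k := k) (z := b) (by omega) (by omega) with h' | h' <;> omega
    · rcases emod_cases (N := N) (k := k) (z := a) (by omega) (by omega) with h | h <;>
      rcases emod_cases (N := N) (k := k) (z := b) (by omega) (by omega) with h' | h' <;> omega
    · rcases emod_cases (N := N) (k := k) (z := a) (by omega) (by omega) with h | h <;>
      rcases emod_cases (N := N) (k := k) (z := b) (by omega) (by omega) with h' | h' <;> omega
    · rcases emod_cases (N := N) (k := k) (z := a) (by omega) (by omega) with h | h <;>
      rcases emod_cases (N := N) (k := k) (z := b) (by omega) (by omega) with h' | h' <;> omega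
  refine ⟨fun h => (hr _ _ h).1, fun h => (hr _ _ h).2, ?_, ?_⟩
  · intro a b
    unfold ext
    rw [Int.add_emod_right, min_comm, max_comm]
    constructor
    · rintro ⟨h1, h2, h3⟩; exact ⟨by omega, by omega, h3⟩
    · rintro ⟨h1, h2, h3⟩; exact ⟨by omega, by omega, h3⟩
  · rintro a b c d ⟨-, -, h1⟩ ⟨-, -, h2⟩ h3 h4 h5 h6
    obtain ⟨k, hk1, hk2⟩ := hex a
    obtain ⟨-, ha⟩ | ⟨ha, -⟩ := emod_cases (N := N) (k := k) (z := a) (by omega) (by omega)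
    swap
    · omega
    rw [ha] at h1
    rcases emod_cases (N := N) (k := k) (z := c) (by omega) (by omega) with ⟨hc, hc'⟩ | ⟨hc, hc'⟩ <;>
    rcases emod_cases (N := N) (k := k) (z := b) (by omega) (by omega) with ⟨hb, hb'⟩ | ⟨hb, hb'⟩ <;>
    rcases emod_cases (N := N) (k := k) (z := d) (by omega) (by omega) with ⟨hd, hd'⟩ | ⟨hd, hd'⟩ <;>
    rw [hb'] at h1 <;> rw [hc', hd'] at h2 <;> try omega
    · rw [min_eq_left (by omega), max_eq_right (by omega)] at h1 h2
      exact hnc _ _ _ _ (by omega) (by omega) (by omega) (by omega) (by omega) h1 h2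
    · rw [min_eq_left (by omega), max_eq_right (by omega)] at h1
      rw [min_eq_right (by omega), max_eq_left (by omega)] at h2
      exact hnc _ _ _ _ (by omega) (by omega) (by omega) (by omega) (by omega) h2 h1
    · rw [min_eq_right (by omega), max_eq_left (by omega)] at h1
      rw [min_eq_right (by omega), max_eq_left (by omega)] at h2
      exact hnc _ _ _ _ (by omega) (by omega) (by omega) (by omega) (by omega) h1 h2
    · rw [min_eq_right (by omega), max_eq_left (by omega)] at h1
      rw [min_eq_left (by omega), max_eq_right (by omega)] at h2
      exact hnc _ _ _ _ (by omega) (by omega) (by omega) (by omega) (by omega) h2 h1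

/-- Edges of a triangulation with the two ears `p` and `N - 1`, made of a fan at `p + 1` followed
by a fan at `0`. -/
def fanR (N p : ℤ) (x y : ℤ) : Prop :=
  0 ≤ x ∧ x < p ∧ p < y ∧ y < N - 1 ∧ (y = p + 1 ∨ x = 0)

/-- The mirror image of `fanR`: a fan at `p - 1` followed by a fan at `N - 2`. -/
def fanL (N p : ℤ) (x y : ℤ) : Prop :=
  0 ≤ x ∧ x < p ∧ p < y ∧ y < N - 1 ∧ (x = p - 1 ∨ y = N - 2)

theorem tri_fanR {N p : ℤ} (h1 : 1 ≤ p) (h2 : p + 3 ≤ N) : Tri N (ext N (fanR N p)) where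
  toPreTri := preTri_ext (by omega) (fun x y _ _ _ h => by unfold fanR at h; omega)
    (fun x y z w _ _ _ _ _ h h' => by unfold fanR at h h'; omega)
  card := by
    have : Win N (ext N (fanR N p)) =
        (Finset.Ico 0 p) ×ˢ {p + 1} ∪ {0} ×ˢ (Finset.Ico (p + 2) (N - 1)) := by
      ext ⟨x, y⟩
      rw [mem_Win_ext]
      simp only [fanR, Finset.mem_union, Finset.mem_product, Finset.mem_Ico, Finset.mem_singleton]
      omega
    rw [this, Finset.card_union_of_disjoint]
    · simp; omega
    · rw [Finset.disjoint_left]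
      rintro ⟨x, y⟩
      simp only [Finset.mem_product, Finset.mem_Ico, Finset.mem_singleton]
      omega

theorem tri_fanL {N p : ℤ} (h1 : 1 ≤ p) (h2 : p + 3 ≤ N) : Tri N (ext N (fanL N p)) where
  toPreTri := preTri_ext (by omega) (fun x y _ _ _ h => by unfold fanL at h; omega)
    (fun x y z w _ _ _ _ _ h h' => by unfold fanL at h h'; omega)
  card := by
    have : Win N (ext N (fanL N p)) =
        {p - 1} ×ˢ (Finset.Ico (p + 1) (N - 1)) ∪ (Finset.Ico 0 (p - 1)) ×ˢ {N - 2} := by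
      ext ⟨x, y⟩
      rw [mem_Win_ext]
      simp only [fanL, Finset.mem_union, Finset.mem_product, Finset.mem_Ico, Finset.mem_singleton]
      omega
    rw [this, Finset.card_union_of_disjoint]
    · simp; omega
    · rw [Finset.disjoint_left]
      rintro ⟨x, y⟩
      simp only [Finset.mem_product, Finset.mem_Ico, Finset.mem_singleton]
      omega

theorem exists_rot_ext {N : ℤ} {t : ℤ → ℝ} (ht : Circ N t) {p q : ℤ}
    (P : ℤ → ℤ → Prop) (hT : Tri N (ext N P)) (hp1 : p + 2 ≤ q) (hp2 : q + 2 ≤ p + N)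
    (hP : P (p - q + N - 2) (p - q + N)) :
    ∃ T, Tri N T ∧ ∃ R, lens N t T = earLen t p ::ₘ R ∧
      ∀ x ∈ R, ∃ a b, 0 ≤ a ∧ a < b ∧ b < N ∧ P a b ∧ ¬ (a = p - q + N - 2 ∧ b = p - q + N) ∧
        x = Real.sin (t (b + (q - N + 1)) - t (a + (q - N + 1))) := by
  refine ⟨rot (-(q - N + 1)) (ext N P), hT.rot _, ?_⟩
  rw [lens_rot hT.toPreTri ht]
  have hmem : (p - q + N - 2, p - q + N) ∈ Win N (ext N P) :=
    mem_Win_ext.2 ⟨by dsimp only; omega, by dsimp only; omega, by dsimp only; omega, hP⟩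
  refine ⟨((Win N (ext N P)).erase (p - q + N - 2, p - q + N)).val.map
    fun p => Real.sin (t (p.2 + (q - N + 1)) - t (p.1 + (q - N + 1))), ?_, ?_⟩
  · unfold lens earLen
    simp only [sub_neg_eq_add]
    conv_lhs => rw [← Finset.insert_erase hmem, Finset.insert_val_of_notMem (by simp),
      Multiset.map_cons]
    congr 1
    · dsimp only
      rw [show p - q + N + (q - N + 1) = p + 1 by ring,
        show p - q + N - 2 + (q - N + 1) = p - 1 by ring]
  · intro x hx
    obtain ⟨⟨a, b⟩, hab, rfl⟩ := Multiset.mem_map.1 hx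
    have hab' := Finset.mem_erase.1 (Finset.mem_def.2 hab)
    have := mem_Win_ext.1 hab'.2
    refine ⟨a, b, this.1, this.2.1, this.2.2.1, this.2.2.2, ?_, rfl⟩
    intro h
    exact hab'.1 (Prod.ext h.1 h.2)

/-- There is a triangulation all of whose diagonals separate the ears `p` and `q`, and in which
the second diagonal from `p` is `{p - 2, p + 1}` whenever there is room for it. -/
theorem exists_fanR {N : ℤ} {t : ℤ → ℝ} (ht : Circ N t) {p q : ℤ} (hp1 : p + 2 ≤ q)
    (hp2 : q + 2 ≤ p + N) :
    ∃ T, Tri N T ∧ ∃ R, lens N t T = earLen t p ::ₘ R ∧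
      ∀ x ∈ R, ∃ a b, q - N < a ∧ a < p ∧ p < b ∧ b < q ∧ x = Real.sin (t b - t a) ∧
        (a ≤ p - 2 ∨ a = q - N + 1) := by
  obtain ⟨T, hT, R, hR, h⟩ := exists_rot_ext ht (fanR N (p - q + N - 1))
    (tri_fanR (by omega) (by omega)) hp1 hp2 (by unfold fanR; omega)
  refine ⟨T, hT, R, hR, fun x hx => ?_⟩
  obtain ⟨a, b, h1, h2, h3, h4, h5, rfl⟩ := h x hx
  unfold fanR at h4
  exact ⟨a + (q - N + 1), b + (q - N + 1), by omega, by omega, by omega, by omega, rfl, by omega⟩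

/-- The mirror image of `exists_fanR`, with `{p - 1, p + 2}` in place of `{p - 2, p + 1}`. -/
theorem exists_fanL {N : ℤ} {t : ℤ → ℝ} (ht : Circ N t) {p q : ℤ} (hp1 : p + 2 ≤ q)
    (hp2 : q + 2 ≤ p + N) :
    ∃ T, Tri N T ∧ ∃ R, lens N t T = earLen t p ::ₘ R ∧
      ∀ x ∈ R, ∃ a b, q - N < a ∧ a < p ∧ p < b ∧ b < q ∧ x = Real.sin (t b - t a) ∧
        (p + 2 ≤ b ∨ b = q - 1) := by
  obtain ⟨T, hT, R, hR, h⟩ := exists_rot_ext ht (fanL N (p - q + N - 1))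
    (tri_fanL (by omega) (by omega)) hp1 hp2 (by unfold fanL; omega)
  refine ⟨T, hT, R, hR, fun x hx => ?_⟩
  obtain ⟨a, b, h1, h2, h3, h4, h5, rfl⟩ := h x hx
  unfold fanL at h4
  exact ⟨a + (q - N + 1), b + (q - N + 1), by omega, by omega, by omega, by omega, rfl, by omega⟩

/-! ### Two maximal triangulations share an ear -/

/-- `E` is a triangulation whose sorted list of diagonal lengths is lexicographically maximal. -/
def LM (N : ℤ) (t : ℤ → ℝ) (E : ℤ → ℤ → Prop) : Prop :=
  Tri N E ∧ ∀ F, Tri N F → ¬ SLt (lens N t E) (lens N t F)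

/-- Two maximal triangulations without a common ear, and their common minimal length `m`; the
goal of this section is to show that this situation is impossible. -/
structure Cfg (N : ℤ) (t : ℤ → ℝ) (E E' : ℤ → ℤ → Prop) (m : ℝ) : Prop where
  hN : 5 ≤ N
  ht : Circ N t
  hE : LM N t E
  hE' : LM N t E'
  eq : lens N t E = lens N t E'
  ns : ∀ k, Ear E k → ¬ Ear E' k
  mem : m ∈ lens N t E
  le : ∀ x ∈ lens N t E, m ≤ x

section Cfg

variable {N : ℤ} {t : ℤ → ℝ} {E E' : ℤ → ℤ → Prop} {m : ℝ}

theorem Cfg.symm (h : Cfg N t E E' m) : Cfg N t E' E m where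
  hN := h.hN
  ht := h.ht
  hE := h.hE'
  hE' := h.hE
  eq := h.eq.symm
  ns := fun k hk hk' => h.ns k hk' hk
  mem := h.eq ▸ h.mem
  le := h.eq ▸ h.le

theorem PreTri.ear_norm (h : PreTri N E) (hN : 0 < N) (ht : Circ N t) (c : ℤ) {k : ℤ}
    (hk : Ear E k) : ∃ u, c ≤ k + N * u ∧ k + N * u < c + N ∧ Ear E (k + N * u) ∧
      earLen t (k + N * u) = earLen t k := by
  have h1 := Int.emod_nonneg (k - c) hN.ne'
  have h2 := Int.emod_lt_of_pos (k - c) hN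
  have h3 := Int.emod_add_mul_ediv (k - c) N
  refine ⟨-((k - c) / N), ?_, ?_, (h.ear_shift _ _).2 hk, ht.earLen_shift _ _⟩ <;>
  · rw [mul_neg]; omega

theorem PreTri.earLen_mem (h : PreTri N E) (hN : 0 < N) (ht : Circ N t) {k : ℤ} (hk : Ear E k) :
    earLen t k ∈ lens N t E := (mem_lens h hN ht).2 ⟨_, _, hk, rfl⟩

/-- A shortest diagonal cuts off an ear: the ears on its two sides are nested in it, and by
unimodality of the sine one of them would be shorter otherwise. -/
theorem Tri.min_ear (h : Tri N E) (hN : 0 < N) (ht : Circ N t) (hm : ∀ x ∈ lens N t E, m ≤ x)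
    {a b : ℤ} (hab : E a b) (hl : Real.sin (t b - t a) = m) :
    ∃ k, Ear E k ∧ earLen t k = m ∧ (a = k - 1 ∧ b = k + 1 ∨ b = k - 1 ∧ a + N = k + 1) := by
  obtain ⟨k, hk1, hk2, hk⟩ := h.exists_ear hab
  obtain ⟨l, hl1, hl2, hl'⟩ := h.exists_ear (h.per.1 hab)
  by_cases hak : a = k - 1 ∧ b = k + 1
  · exact ⟨k, hk, by rw [earLen, ← hl, hak.1, hak.2], Or.inl hak⟩
  by_cases hbl : b = l - 1 ∧ a + N = l + 1
  · refine ⟨l, hl', ?_, Or.inr hbl⟩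
    rw [earLen, ← hl, ← hbl.1, ← hbl.2, ht.sin_swap]
  exfalso
  have e1 := hm _ (h.earLen_mem hN ht hk)
  have e2 := hm _ (h.earLen_mem hN ht hl')
  have f1 := ht.mono (show k - 1 < k + 1 by omega)
  have f2 := ht.mono (show l - 1 < l + 1 by omega)
  have f3 := ht.mono.monotone (show a ≤ k - 1 by omega)
  have f4 := ht.mono.monotone (show k + 1 ≤ b by omega)
  have f5 := ht.mono.monotone (show b ≤ l - 1 by omega)
  have f6 := ht.mono.monotone (show l + 1 ≤ a + N by omega)
  rw [ht.per] at f6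
  have g1 : t (k + 1) - t (k - 1) < t b - t a := by
    rcases eq_or_ne a (k - 1) with h1 | h1
    · have := ht.mono (show k + 1 < b by omega); linarith
    · have := ht.mono (show a < k - 1 by omega); linarith
  have g2 : t b - t a < Real.pi - (t (l + 1) - t (l - 1)) := by
    rcases eq_or_ne b (l - 1) with h1 | h1
    · have := ht.mono (show l + 1 < a + N by omega)
      rw [ht.per] at this; linarith
    · have := ht.mono (show b < l - 1 by omega); linarith
  have := min_sin_lt (by linarith) (by linarith) g1 g2
  rw [hl] at this
  exact absurd (le_min e1 e2) (not_le.2 this)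

/-- If `E` has two ears of minimal length, so has `E'`. -/
theorem Cfg.exists_two (h : Cfg N t E E' m) {i g : ℤ} (h1 : 1 ≤ i) (h2 : i < g) (h3 : g ≤ N)
    (hi : Ear E i) (hg : Ear E g) (hi' : earLen t i = m) (hg' : earLen t g = m) :
    ∃ k l, 1 ≤ k ∧ k < l ∧ l ≤ N ∧ Ear E' k ∧ Ear E' l ∧ earLen t k = m ∧ earLen t l = m := by
  have hN := h.hN
  -- the representative in the window of the diagonal cutting off `k ∈ [1, N]`
  have hpr : ∀ k, 1 ≤ k → k ≤ N → Ear E k → earLen t k = m → ∃ p ∈ Win N E,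
      m = Real.sin (t p.2 - t p.1) ∧
        ((p.1 = k - 1 ∧ p.2 = k + 1) ∨ (p.1 = k + 1 - N ∧ p.2 = k - 1)) := by
    intro k hk1 hk2 hk hkm
    by_cases hk3 : k ≤ N - 2
    · exact ⟨(k - 1, k + 1), mem_Win.2 ⟨by dsimp only; omega, by dsimp only; omega,
        by dsimp only; omega, hk⟩, hkm.symm, Or.inl ⟨rfl, rfl⟩⟩
    · refine ⟨(k + 1 - N, k - 1), mem_Win.2 ⟨by dsimp only; omega, by dsimp only; omega,
        by dsimp only; omega, ?_⟩, ?_, Or.inr ⟨rfl, rfl⟩⟩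
      · rw [h.hE.1.per, sub_add_cancel]; exact hk
      · rw [← h.ht.sin_swap, sub_add_cancel]; exact hkm.symm
  obtain ⟨p, hp, hpm, hpi⟩ := hpr i h1 (by omega) hi hi'
  obtain ⟨q, hq, hqm, hqg⟩ := hpr g (by omega) h3 hg hg'
  have hne : p ≠ q := by
    rintro rfl
    omega
  have hcard : ∀ E, (lens N t E).count m =
      ((Win N E).filter fun p => m = Real.sin (t p.2 - t p.1)).card := by
    intro E
    rw [lens, Multiset.count_map]
    rfl
  have h2E : 1 < ((Win N E).filter fun p => m = Real.sin (t p.2 - t p.1)).card :=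
    Finset.one_lt_card.2 ⟨p, Finset.mem_filter.2 ⟨hp, hpm⟩, q, Finset.mem_filter.2 ⟨hq, hqm⟩, hne⟩
  rw [← hcard, h.eq, hcard] at h2E
  obtain ⟨p', hp', q', hq', hne'⟩ := Finset.one_lt_card.1 h2E
  rw [Finset.mem_filter, mem_Win] at hp' hq'
  obtain ⟨k, hk, hkm, hk'⟩ := h.hE'.1.min_ear (by omega) h.ht h.symm.le hp'.1.2.2.2 hp'.2.symm
  obtain ⟨l, hl, hlm, hl'⟩ := h.hE'.1.min_ear (by omega) h.ht h.symm.le hq'.1.2.2.2 hq'.2.symm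
  rcases lt_trichotomy k l with hkl | rfl | hkl
  · exact ⟨k, l, by omega, hkl, by omega, hk, hl, hkm, hlm⟩
  · exact absurd (Prod.ext (by omega) (by omega)) hne'
  · exact ⟨l, k, by omega, hkl, by omega, hl, hk, hlm, hkm⟩

/-- The ear of minimal length is unique: otherwise there would be four ears of equal length, but
ears of equal length have tips at cyclic distance two. -/
theorem Cfg.single (h : Cfg N t E E' m) {i g : ℤ} (hig : i < g) (hgi : g < i + N)
    (hi : Ear E i) (hg : Ear E g) (hi' : earLen t i = m) (hg' : earLen t g = m) : False := by
  have hN := h.hN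
  have key : ∀ i g, 1 ≤ i → i < g → g ≤ N → Ear E i → Ear E g → earLen t i = m →
      earLen t g = m → False := by
    intro i g h1 h2 h3 hi hg hi' hg'
    obtain ⟨k, l, h4, h5, h6, hk, hl, hk', hl'⟩ := h.exists_two h1 h2 h3 hi hg hi' hg'
    have e : ∀ a b, 1 ≤ a → a < b → b ≤ N → earLen t a = m → earLen t b = m →
        b = a + 2 ∨ b = a + N - 2 := fun a b ha hab hb ha' hb' =>
      h.ht.eq_ear (by omega) hab (by omega) (by rw [ha', hb'])
    have n1 : i ≠ k := fun e => h.ns i hi (e ▸ hk)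
    have n2 : i ≠ l := fun e => h.ns i hi (e ▸ hl)
    have n3 : g ≠ k := fun e => h.ns g hg (e ▸ hk)
    have n4 : g ≠ l := fun e => h.ns g hg (e ▸ hl)
    have d : ∀ a b, 1 ≤ a → a ≤ N → 1 ≤ b → b ≤ N → a ≠ b → earLen t a = m → earLen t b = m →
        b = a + 2 ∨ b = a + N - 2 ∨ a = b + 2 ∨ a = b + N - 2 := by
      intro a b ha ha2 hb hb2 hab ha' hb'
      rcases lt_or_gt_of_ne hab with hab | hab
      · have := e a b ha hab hb2 ha' hb'; omega
      · have := e b a hb hab ha2 hb' ha'; omega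
    have d1 := e i g h1 h2 h3 hi' hg'
    have d2 := e k l h4 h5 h6 hk' hl'
    have d3 := d i k (by omega) (by omega) (by omega) (by omega) n1 hi' hk'
    have d4 := d i l (by omega) (by omega) (by omega) (by omega) n2 hi' hl'
    have d5 := d g k (by omega) (by omega) (by omega) (by omega) n3 hg' hk'
    have d6 := d g l (by omega) (by omega) (by omega) (by omega) n4 hg' hl'
    omega
  obtain ⟨u, hu1, hu2, hu3, hu4⟩ := h.hE.1.ear_norm (by omega) h.ht 1 hi
  obtain ⟨v, hv1, hv2, hv3, hv4⟩ := h.hE.1.ear_norm (by omega) h.ht 1 hg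
  rcases lt_trichotomy (i + N * u) (g + N * v) with hlt | heq | hlt
  · exact key _ _ hu1 hlt (by omega) hu3 hv3 (hu4.trans hi') (hv4.trans hg')
  · have e : g - i = N * (u - v) := by linarith
    rcases le_or_gt (u - v) 0 with huv | huv
    · nlinarith
    · nlinarith
  · exact key _ _ hv1 hlt (by omega) hv3 hu3 (hv4.trans hg') (hu4.trans hi')

theorem Cfg.lt_earLen (h : Cfg N t E E' m) {i g : ℤ} (hig : i < g) (hgi : g < i + N)
    (hi : Ear E i) (hg : Ear E g) (hi' : earLen t i = m) : m < earLen t g :=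
  lt_of_le_of_ne (h.le _ (h.hE.1.earLen_mem (by have := h.hN; omega) h.ht hg)) fun e =>
    h.single hig hgi hi hg hi' e.symm

/-- If two non-adjacent vertices have ears longer than `m`, the triangulation by diagonals
separating these ears has all lengths greater than `m`. -/
theorem Cfg.nonadj (h : Cfg N t E E' m) {p q : ℤ} (h1 : p + 2 ≤ q) (h2 : q + 2 ≤ p + N)
    (hp : m < earLen t p) (hq : m < earLen t q) : False := by
  obtain ⟨T, hT, R, hR, hx⟩ := exists_fanR h.ht h1 h2
  refine h.hE.2 T hT (sLt_of_forall_lt h.mem ?_)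
  intro x hxT
  rw [hR, Multiset.mem_cons] at hxT
  rcases hxT with rfl | hxR
  · exact hp
  · obtain ⟨a, b, ha, hap, hpb, hb, rfl, -⟩ := hx x hxR
    exact (lt_min hp hq).trans_le (h.ht.min_le (c := p - 1) (d := p + 1) (by omega) (by omega)
      (by omega) hb (by omega))

/-- An ear of `E'` cannot have ears of `E` at both neighbouring vertices, since `E` has no
diagonal at these vertices and hence none of the same length. -/
theorem Cfg.between (h : Cfg N t E E' m) {k : ℤ} (hk : Ear E' k) (h1 : Ear E (k - 1))
    (h2 : Ear E (k + 1)) : False := by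
  have hN := h.hN
  have hmem := h.hE'.1.earLen_mem (by omega) h.ht hk
  rw [← h.eq, mem_lens h.hE.1.toPreTri (by omega) h.ht] at hmem
  obtain ⟨a₀, b₀, hab₀, hs₀⟩ := hmem
  obtain ⟨a, b, ha, hab, hb, hE, hs⟩ := h.hE.1.normalize (by omega) h.ht (k - 1) hab₀
  rw [hs₀, earLen] at hs
  have hlo := h.hE.1.lo hE
  have n1 : a ≠ k - 1 := fun e => h.hE.1.tip h1 (e ▸ hE)
  have n2 : a ≠ k + 1 := fun e => h.hE.1.tip h2 (e ▸ hE)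
  have n3 : b ≠ k + 1 := fun e => h.hE.1.tip' h2 (e ▸ hE)
  rcases eq_or_ne a k with rfl | n4
  · exact h.ht.gen (a - 1) a (a + 1) b (by omega) (by omega) (by omega) (by omega) hs.symm
  · exact h.ht.disj (a := k - 1) (b := k + 1) (c := a) (d := b) (by omega) (by omega) (by omega)
      (by omega) hs.symm

/-- The triangle at the diagonal cutting off the minimal ear shares a second side with the
boundary. -/
theorem Cfg.second (h : Cfg N t E E' m) {i : ℤ} (hi : Ear E i) (hi' : earLen t i = m) :
    E (i - 2) (i + 1) ∨ E (i - 1) (i + 2) := by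
  have hN := h.hN
  obtain ⟨c, hc1, hc2, hs1, hs2⟩ := h.hE.1.apex (a := i + 1) (b := i - 1 + N) (by omega)
    (Or.inr (Or.inl (h.hE.1.per.1 hi)))
  unfold Side at hs1 hs2
  by_cases e1 : c = i + 2
  · right
    rw [h.hE.1.per]
    rcases hs2 with h' | h' | h'
    · omega
    · exact e1 ▸ h'
    · omega
  by_cases e2 : c = i - 2 + N
  · left
    rw [h.hE.1.per]
    rcases hs1 with h' | h' | h'
    · omega
    · exact e2 ▸ h'
    · omega
  exfalso
  have hc3 : E (i + 1) c := by
    rcases hs1 with h' | h' | h'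
    · omega
    · exact h'
    · omega
  have hc4 : E c (i - 1 + N) := by
    rcases hs2 with h' | h' | h'
    · omega
    · exact h'
    · omega
  obtain ⟨k, hk1, hk2, hk⟩ := h.hE.1.exists_ear hc3
  obtain ⟨l, hl1, hl2, hl⟩ := h.hE.1.exists_ear hc4
  exact h.nonadj (p := k) (q := l) (by omega) (by omega)
    (h.lt_earLen (by omega) (by omega) hi hk hi') (h.lt_earLen (by omega) (by omega) hi hl hi')

/-- If `s > m` is a length and `m ::ₘ R` the lengths of a triangulation, then some element of
`R` is at most `s`. -/
theorem Cfg.improve (h : Cfg N t E E' m) {T : ℤ → ℤ → Prop} (hT : Tri N T) {R : Multiset ℝ}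
    (hR : lens N t T = m ::ₘ R) {s : ℝ} (hs : s ∈ lens N t E) (hms : m < s)
    (hx : ∀ x ∈ R, s < x) : False := by
  obtain ⟨R', hR'⟩ := Multiset.exists_cons_of_mem h.mem
  refine h.hE.2 T hT ?_
  rw [hR', Multiset.mem_cons] at hs
  rw [hR, hR', sLt_cons_iff]
  exact sLt_of_forall_lt (hs.resolve_left hms.ne') hx

theorem exists_mem_lt_min {M : Multiset ℝ} {a b y d : ℝ} (hy : y ∈ M) (hd : d ∈ M)
    (hmy : m < y) (hmd : m < d) (hya : min y b < a) (hdb : d < b) :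
    ∃ s ∈ M, m < s ∧ s < min a b := by
  refine ⟨min y d, ?_, lt_min hmy hmd, lt_min (lt_of_le_of_lt (min_le_min_left y hdb.le) hya)
    ((min_le_right _ _).trans_lt hdb)⟩
  rcases min_choice y d with e | e <;> rw [e] <;> assumption

end Cfg

section Cfg

variable {N : ℤ} {t : ℤ → ℝ} {E E' : ℤ → ℤ → Prop} {m : ℝ}

/-- If the minimal ears of `E` and `E'` are at `i` and `i + 2`, the remaining long ears `g` of `E`
and `g'` of `E'` are adjacent and far away from both. -/
theorem Cfg.exists_far (h : Cfg N t E E' m) {i : ℤ} (hi : Ear E i) (hi' : Ear E' (i + 2))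
    (him : earLen t i = m) (him' : earLen t (i + 2) = m) :
    ∃ g g', Ear E g ∧ Ear E' g' ∧ i + 4 ≤ g ∧ g ≤ i + N - 2 ∧ i + 4 ≤ g' ∧ g' ≤ i + N - 2 ∧
      m < earLen t g ∧ m < earLen t g' ∧ (g' = g + 1 ∨ g = g' + 1) := by
  have hN := h.hN
  obtain ⟨g, hg1, hg2, hg⟩ := h.hE.1.exists_ear (h.hE.1.per.1 hi)
  obtain ⟨g', hg1', hg2', hg'⟩ := h.hE'.1.exists_ear (h.hE'.1.per.1 hi')
  have n1 : g ≠ i + 2 := fun e => h.ns _ hg (e ▸ hi')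
  have n2 : g' ≠ i + N := by
    rintro rfl
    exact h.ns _ hi (by simpa using (h.hE'.1.ear_shift 1 i).1 (by simpa using hg'))
  have n3 : g ≠ g' := by
    rintro rfl
    exact h.ns _ hg hg'
  have l1 := h.lt_earLen (by omega) (by omega) hi hg him
  have l2 := h.symm.lt_earLen (by omega) (by omega) hi' hg' him'
  have hadj : g' = g + 1 ∨ g = g' + 1 := by
    by_contra hc
    rcases lt_or_gt_of_ne n3 with hlt | hlt
    · exact h.nonadj (p := g) (q := g') (by omega) (by omega) l1 l2
    · exact h.nonadj (p := g') (q := g) (by omega) (by omega) l2 l1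
  have m1 : g' ≠ i + N - 1 := by
    rintro rfl
    refine h.between hg' ?_ ?_
    · convert hg using 1; omega
    · have := (h.hE.1.ear_shift 1 i).2 hi
      convert this using 1; ring
  have m2 : g ≠ i + 3 := by
    rintro rfl
    refine h.symm.between hg ?_ ?_
    · convert hi' using 1; ring
    · convert hg' using 1; omega
  exact ⟨g, g', hg, hg', by omega, by omega, by omega, by omega, l1, l2, hadj⟩

/-- Let the minimal ears of `E` and `E'` be at `i` and `i + 2`, and suppose that
`{i - 1, i + 2}` is longer than `{i, i + 3}`. A triangulation with ears at `i` and `c`, in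
which `{i - 1, i + 2}` comes next after the ear `i`, then beats both. -/
theorem Cfg.core_left (h : Cfg N t E E' m) {i : ℤ} (hi' : Ear E' (i + 2))
    (him : earLen t i = m) (him' : earLen t (i + 2) = m) {g' c d : ℤ}
    (hg' : Ear E' g') (hg1' : i + 4 ≤ g') (hg2' : g' ≤ i + N - 2) (hmg : m < earLen t g')
    (hc1 : i + 4 ≤ c) (hc2 : c ≤ i + N - 2) (hd : earLen t d ∈ lens N t E)
    (hmd : m < earLen t d) (hdc : earLen t d < earLen t c)
    (hY1 : t (i + 3) - t i < t (i + 2) - t (i - 1))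
    (hY2 : t (i + 4) - t (i + 1) < t (i + 2) - t (i - 1)) : False := by
  have hN := h.hN
  -- the second diagonal `{u, v}` of `E'` at the ear `i + 2`
  obtain ⟨u, v, huv, hu, hv, hlt, hne, hv2, hiu⟩ : ∃ u v, E' u v ∧ u ≤ i + 1 ∧ i + 3 ≤ v ∧
      t v - t u < t (i + 2) - t (i - 1) ∧ ¬ (u = i + 1 ∧ v = i + 3) ∧ v ≤ g' - 1 ∧ i ≤ u := by
    rcases h.symm.second hi' him' with h' | h'
    · rw [show i + 2 - 2 = i by ring, show i + 2 + 1 = i + 3 by ring] at h'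
      exact ⟨i, i + 3, h', by omega, by omega, hY1, by omega, by omega, le_rfl⟩
    · rw [show i + 2 - 1 = i + 1 by ring, show i + 2 + 2 = i + 4 by ring] at h'
      have : g' ≠ i + 4 := fun e => h.hE'.1.tip' hg' (e ▸ h')
      exact ⟨i + 1, i + 4, h', by omega, by omega, hY2, by omega, by omega, by omega⟩
  have hy : Real.sin (t v - t u) ∈ lens N t E := by
    rw [h.eq]
    exact (mem_lens h.hE'.1.toPreTri (by omega) h.ht).2 ⟨u, v, huv, rfl⟩
  have a0 := h.ht.mono (show i + 1 < i + 3 by omega)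
  have a1 : t (i + 3) - t (i + 1) < t v - t u := by
    rcases eq_or_ne u (i + 1) with e | e
    · have := h.ht.mono (show i + 3 < v by omega)
      rw [e]; linarith
    · have := h.ht.mono (show u < i + 1 by omega)
      have := h.ht.mono.monotone hv
      linarith
  have hmy : m < Real.sin (t v - t u) := by
    have a2 := h.ht.mono.monotone hv2
    have a3 := h.ht.mono (show g' + 1 < u + N by omega)
    have a4 := h.ht.mono (show g' - 1 < g' + 1 by omega)
    rw [h.ht.per] at a3
    have := min_sin_lt (B := t (g' + 1) - t (g' - 1)) (by linarith) (by linarith) a1 (by linarith)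
    refine lt_of_le_of_lt (le_min ?_ hmg.le) this
    rw [← him', earLen, show i + 2 + 1 = i + 3 by ring, show i + 2 - 1 = i + 1 by ring]
  have hX : min (Real.sin (t v - t u)) (earLen t c) < Real.sin (t (i + 2) - t (i - 1)) := by
    have a2 := h.ht.mono (show i + 2 < c - 1 by omega)
    have a3 := h.ht.mono.monotone (show c + 1 ≤ i - 1 + N by omega)
    have a4 := h.ht.mono (show c - 1 < c + 1 by omega)
    rw [h.ht.per] at a3
    exact min_sin_lt (by linarith) (by linarith) hlt (by linarith)
  obtain ⟨s, hs, hms, hsm⟩ := exists_mem_lt_min hy hd hmy hmd hX hdc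
  obtain ⟨T, hT, R, hR, hx⟩ := exists_fanL h.ht (p := i) (q := c) (by omega) (by omega)
  rw [him] at hR
  refine h.improve hT hR hs hms fun x hxR => ?_
  obtain ⟨a, b, ha, hai, hib, hbc, rfl, hab⟩ := hx x hxR
  exact hsm.trans_le (h.ht.min_le (c := i - 1) (d := i + 2) (by omega) (by omega) (by omega) hbc
    (by omega))

/-- The mirror image of `Cfg.core_left`: `{i, i + 3}` is longer than `{i - 1, i + 2}`, and the
triangulation has ears at `i + 2` and `c`. -/
theorem Cfg.core_right (h : Cfg N t E E' m) {i : ℤ} (hi : Ear E i)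
    (him : earLen t i = m) (him' : earLen t (i + 2) = m) {g c d : ℤ}
    (hg : Ear E g) (hg1 : i + 4 ≤ g) (hg2 : g ≤ i + N - 2) (hmg : m < earLen t g)
    (hc1 : i + 4 ≤ c) (hc2 : c ≤ i + N - 2) (hd : earLen t d ∈ lens N t E)
    (hmd : m < earLen t d) (hdc : earLen t d < earLen t c)
    (hX1 : t (i + 1) - t (i - 2) < t (i + 3) - t i)
    (hX2 : t (i + 2) - t (i - 1) < t (i + 3) - t i) : False := by
  have hN := h.hN
  -- the second diagonal `{u, v}` of `E` at the ear `i`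
  obtain ⟨u, v, huv, hu, hv, hlt, hne, hu2, hvi⟩ : ∃ u v, E u v ∧ u ≤ i - 1 ∧ i + 1 ≤ v ∧
      t v - t u < t (i + 3) - t i ∧ ¬ (u = i - 1 ∧ v = i + 1) ∧ g + 1 ≤ u + N ∧ v ≤ i + 2 := by
    rcases h.second hi him with h' | h'
    · have : g ≠ i - 2 + N := fun e => h.hE.1.tip' hg (e ▸ h.hE.1.per.1 h')
      exact ⟨i - 2, i + 1, h', by omega, by omega, hX1, by omega, by omega, by omega⟩
    · exact ⟨i - 1, i + 2, h', by omega, by omega, hX2, by omega, by omega, by omega⟩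
  have hy : Real.sin (t v - t u) ∈ lens N t E :=
    (mem_lens h.hE.1.toPreTri (by omega) h.ht).2 ⟨u, v, huv, rfl⟩
  have a0 := h.ht.mono (show i - 1 < i + 1 by omega)
  have a1 : t (i + 1) - t (i - 1) < t v - t u := by
    rcases eq_or_ne u (i - 1) with e | e
    · have := h.ht.mono (show i + 1 < v by omega)
      rw [e]; linarith
    · have := h.ht.mono (show u < i - 1 by omega)
      have := h.ht.mono.monotone hv
      linarith
  have hmy : m < Real.sin (t v - t u) := by
    have a2 := h.ht.mono (show v < g - 1 by omega)
    have a3 := h.ht.mono.monotone hu2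
    have a4 := h.ht.mono (show g - 1 < g + 1 by omega)
    rw [h.ht.per] at a3
    have := min_sin_lt (B := t (g + 1) - t (g - 1)) (by linarith) (by linarith) a1 (by linarith)
    exact lt_of_le_of_lt (le_min him.ge hmg.le) this
  have hX : min (Real.sin (t v - t u)) (earLen t c) < Real.sin (t (i + 3) - t i) := by
    have a2 := h.ht.mono.monotone (show i + 3 ≤ c - 1 by omega)
    have a3 := h.ht.mono (show c + 1 < i + N by omega)
    have a4 := h.ht.mono (show c - 1 < c + 1 by omega)
    rw [h.ht.per] at a3
    exact min_sin_lt (by linarith) (by linarith) hlt (by linarith)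
  obtain ⟨s, hs, hms, hsm⟩ := exists_mem_lt_min hy hd hmy hmd hX hdc
  obtain ⟨T, hT, R, hR, hx⟩ := exists_fanR h.ht (p := i + 2) (q := c) (by omega) (by omega)
  rw [him'] at hR
  refine h.improve hT hR hs hms fun x hxR => ?_
  obtain ⟨a, b, ha, hai, hib, hbc, rfl, hab⟩ := hx x hxR
  exact hsm.trans_le (h.ht.min_le (c := i) (d := i + 3) (by omega) (by omega) (by omega) hbc
    (by omega))

theorem Cfg.core (h : Cfg N t E E' m) {i : ℤ} (hi : Ear E i) (hi' : Ear E' (i + 2))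
    (him : earLen t i = m) (him' : earLen t (i + 2) = m) : False := by
  have hN := h.hN
  obtain ⟨g, g', hg, hg', g1, g2, g1', g2', hmg, hmg', hadj⟩ := h.exists_far hi hi' him him'
  -- of two adjacent positions, one leaves room on the left, the other on the right
  obtain ⟨c, hc1, hc2, hc⟩ : ∃ c, i + 4 ≤ c ∧ c ≤ i + N - 3 ∧ m < earLen t c := by
    rcases hadj with e | e
    · exact ⟨g, g1, by omega, hmg⟩
    · exact ⟨g', g1', by omega, hmg'⟩
  obtain ⟨d, hd1, hd2, hd⟩ : ∃ d, i + 5 ≤ d ∧ d ≤ i + N - 2 ∧ m < earLen t d := by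
    rcases hadj with e | e
    · exact ⟨g', by omega, g2', hmg'⟩
    · exact ⟨g, by omega, g2, hmg⟩
  have hl : earLen t (i - 1) < m := by
    by_contra! hle
    have hne := h.ht.earLen_ne_succ (by omega) (i - 1)
    rw [sub_add_cancel, him] at hne
    exact h.nonadj (p := c) (q := i - 1 + N) (by omega) (by omega) hc
      (by rw [h.ht.earLen_add]; exact lt_of_le_of_ne hle hne.symm)
  have hr : earLen t (i + 3) < m := by
    by_contra! hle
    have hne := h.ht.earLen_ne_succ (by omega) (i + 2)
    rw [show i + 2 + 1 = i + 3 by ring, him'] at hne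
    exact h.nonadj (p := i + 3) (q := d) (by omega) (by omega) (lt_of_le_of_ne hle hne) hd
  rw [earLen, sub_add_cancel, show i - 1 - 1 = i - 2 by ring] at hl
  rw [earLen, show i + 3 + 1 = i + 4 by ring, show i + 3 - 1 = i + 2 by ring] at hr
  have m0 := h.ht.mono (show i - 2 < i - 1 by omega)
  have m1 := h.ht.mono (show i - 1 < i by omega)
  have m2 := h.ht.mono (show i < i + 1 by omega)
  have m3 := h.ht.mono (show i + 1 < i + 2 by omega)
  have m4 := h.ht.mono (show i + 2 < i + 3 by omega)
  have m5 := h.ht.mono (show i + 3 < i + 4 by omega)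
  have m6 := h.ht.mono (show i + 3 < i - 1 + N by omega)
  rw [h.ht.per] at m6
  have hA : t (i + 1) - t (i - 1) = t (i + 3) - t (i + 1) := by
    refine eq_of_sin_eq (by linarith) (by linarith) (by linarith) ?_
    have := him.trans him'.symm
    rwa [earLen, earLen, show i + 2 + 1 = i + 3 by ring, show i + 2 - 1 = i + 1 by ring] at this
  have hB : t i - t (i - 2) < t (i + 1) - t (i - 1) := by
    by_contra! hle
    have a2 := h.ht.mono.monotone (show i ≤ c - 1 by omega)
    have a3 := h.ht.mono.monotone (show c + 1 ≤ i - 2 + N by omega)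
    have a4 := h.ht.mono (show c - 1 < c + 1 by omega)
    rw [h.ht.per] at a3
    have := min_sin_le (B := t (c + 1) - t (c - 1)) (by linarith) (by linarith) hle (by linarith)
    exact absurd (le_min him.ge hc.le) (not_le.2 (this.trans_lt hl))
  have hB' : t (i + 4) - t (i + 2) < t (i + 1) - t (i - 1) := by
    by_contra! hle
    have a2 := h.ht.mono.monotone (show i + 4 ≤ d - 1 by omega)
    have a3 := h.ht.mono.monotone (show d + 1 ≤ i + 2 + N by omega)
    have a4 := h.ht.mono (show d - 1 < d + 1 by omega)
    rw [h.ht.per] at a3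
    have := min_sin_le (B := t (d + 1) - t (d - 1)) (by linarith) (by linarith) hle (by linarith)
    exact absurd (le_min him.ge hd.le) (not_le.2 (this.trans_lt hr))
  have hgen : t (i + 2) - t (i - 1) ≠ t (i + 3) - t i := fun e =>
    h.ht.gen (i - 1) i (i + 2) (i + 3) (by omega) (by omega) (by omega) (by omega) (by rw [e])
  have hgm : earLen t g ∈ lens N t E := h.hE.1.earLen_mem (by omega) h.ht hg
  have hgm' : earLen t g' ∈ lens N t E := by
    rw [h.eq]; exact h.hE'.1.earLen_mem (by omega) h.ht hg'
  -- `c₁` is the one of `g`, `g'` with the longer ear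
  obtain ⟨c₁, d₁, hc1, hc2, hdm, hmd, hdc⟩ : ∃ c₁ d₁, i + 4 ≤ c₁ ∧ c₁ ≤ i + N - 2 ∧
      earLen t d₁ ∈ lens N t E ∧ m < earLen t d₁ ∧ earLen t d₁ < earLen t c₁ := by
    have hne : earLen t g ≠ earLen t g' := by
      rcases hadj with e | e
      · rw [e]; exact h.ht.earLen_ne_succ (by omega) _
      · rw [e]; exact (h.ht.earLen_ne_succ (by omega) _).symm
    rcases lt_or_gt_of_ne hne with hlt | hlt
    · exact ⟨g', g, g1', g2', hgm, hmg, hlt⟩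
    · exact ⟨g, g', g1, g2, hgm', hmg', hlt⟩
  rcases lt_or_gt_of_ne hgen with hlt | hlt
  · exact h.core_right hi him him' hg g1 g2 hmg hc1 hc2 hdm hmd hdc (by linarith) hlt
  · exact h.core_left hi' him him' hg' g1' g2' hmg' hc1 hc2 hdm hmd hdc hlt (by linarith)

theorem Cfg.false (h : Cfg N t E E' m) : False := by
  have hN := h.hN
  obtain ⟨a, b, hab, hs⟩ := (mem_lens h.hE.1.toPreTri (by omega) h.ht).1 h.mem
  obtain ⟨i, hi, him, -⟩ := h.hE.1.min_ear (by omega) h.ht h.le hab hs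
  obtain ⟨a', b', hab', hs'⟩ := (mem_lens h.hE'.1.toPreTri (by omega) h.ht).1 h.symm.mem
  obtain ⟨j₀, hj₀, hjm₀, -⟩ := h.hE'.1.min_ear (by omega) h.ht h.symm.le hab' hs'
  obtain ⟨u, hj1, hj2, hj, hjm⟩ := h.hE'.1.ear_norm (by omega) h.ht i hj₀
  generalize j₀ + N * u = j at hj1 hj2 hj hjm
  rw [hjm₀] at hjm
  have hne : i ≠ j := by
    rintro rfl
    exact h.ns _ hi hj
  rcases h.ht.eq_ear (by omega) (lt_of_le_of_ne hj1 hne) hj2 (him.trans hjm.symm) with rfl | rfl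
  · exact h.core hi hj him hjm
  · refine h.symm.core hj ?_ hjm ?_ <;> rw [show i + N - 2 + 2 = i + N * 1 by ring]
    · exact (h.hE.1.ear_shift 1 i).2 hi
    · rw [h.ht.earLen_shift, him]

end Cfg

theorem LM.lens_eq {N : ℤ} {t : ℤ → ℝ} {E E' : ℤ → ℤ → Prop} (h : LM N t E) (h' : LM N t E') :
    lens N t E = lens N t E' := by
  rcases SLt.trichotomy (lens N t E) (lens N t E') with h1 | h1 | h1
  · exact absurd h1 (h.2 _ h'.1)
  · exact h1
  · exact absurd h1 (h'.2 _ h.1)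

theorem exists_common_ear {N : ℤ} (hN : 4 ≤ N) {t : ℤ → ℝ} (ht : Circ N t) {E E' : ℤ → ℤ → Prop}
    (h : LM N t E) (h' : LM N t E') : ∃ k, Ear E k ∧ Ear E' k := by
  by_contra! hns
  have hcard : (lens N t E).card ≠ 0 := by
    have := h.1.card
    rw [lens, Multiset.card_map, Finset.card_val]
    omega
  have hne : lens N t E ≠ 0 := fun e => hcard (by rw [e]; rfl)
  rcases hN.eq_or_lt with rfl | hN
  · -- a quadrangle has two diagonals, of distinct lengths
    obtain ⟨x, hx⟩ := Multiset.exists_mem_of_ne_zero hne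
    have hx' := hx
    rw [h.lens_eq h', lens, Multiset.mem_map] at hx'
    rw [lens, Multiset.mem_map] at hx
    obtain ⟨⟨a, b⟩, hp, rfl⟩ := hx
    obtain ⟨⟨c, d⟩, hq, hs⟩ := hx'
    replace hp := mem_Win.1 (Finset.mem_def.2 hp)
    replace hq := mem_Win.1 (Finset.mem_def.2 hq)
    dsimp only at hp hq hs
    have l1 := h.1.lo hp.2.2.2
    have l2 := h.1.hi hp.2.2.2
    have l3 := h'.1.lo hq.2.2.2
    have l4 := h'.1.hi hq.2.2.2
    have hgen := ht.gen 0 1 2 3 (by omega) (by omega) (by omega) (by omega)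
    have c1 : a = 0 ∧ b = 2 ∨ a = 1 ∧ b = 3 := by omega
    have c2 : c = 0 ∧ d = 2 ∨ c = 1 ∧ d = 3 := by omega
    rcases c1 with ⟨rfl, rfl⟩ | ⟨rfl, rfl⟩ <;> rcases c2 with ⟨rfl, rfl⟩ | ⟨rfl, rfl⟩
    · exact hns 1 hp.2.2.2 hq.2.2.2
    · exact hgen hs.symm
    · exact hgen hs
    · exact hns 2 hp.2.2.2 hq.2.2.2
  · obtain ⟨m, hm, hle⟩ : ∃ m ∈ lens N t E, ∀ x ∈ lens N t E, m ≤ x := by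
      obtain ⟨m, hm, hle⟩ := (lens N t E).toFinset.exists_min_image id
        (Multiset.toFinset_nonempty.2 hne)
      exact ⟨m, Multiset.mem_toFinset.1 hm, fun x hx => hle x (Multiset.mem_toFinset.2 hx)⟩
    exact Cfg.false ⟨by omega, ht, h, h', h.lens_eq h', hns, hm, hle⟩

/-! ### Uniqueness of the maximal triangulation -/

theorem eq_of_Win_eq {N : ℤ} (hN : 0 < N) {E E' : ℤ → ℤ → Prop} (h : PreTri N E)
    (h' : PreTri N E') (hW : Win N E = Win N E') : E = E' := by
  have key : ∀ {E E' : ℤ → ℤ → Prop}, PreTri N E → PreTri N E' → Win N E = Win N E' →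
      ∀ a b, E a b → E' a b := by
    intro E E' h h' hW a b hab
    have h1 := Int.emod_nonneg a hN.ne'
    have h2 := Int.emod_lt_of_pos a hN
    have h3 := Int.emod_add_mul_ediv a N
    have e : N * (-(a / N)) = -(N * (a / N)) := by ring
    rw [← h'.shift_mul (-(a / N))]
    rw [← h.shift_mul (-(a / N))] at hab
    have hlo := h.lo hab
    have hhi := h.hi hab
    have ha : 0 ≤ a + N * (-(a / N)) ∧ a + N * (-(a / N)) < N := by omega
    generalize a + N * (-(a / N)) = a', b + N * (-(a / N)) = b' at *
    by_cases hb : b' < N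
    · exact (mem_Win.1 (hW ▸ mem_Win.2 ⟨ha.1, by dsimp only; omega, hb, hab⟩ :
        (a', b') ∈ Win N E')).2.2.2
    · have hab' : E (b' - N) a' := by rw [h.per]; simpa using hab
      have := (mem_Win.1 (hW ▸ mem_Win.2 ⟨by dsimp only; omega, by dsimp only; omega, ha.2, hab'⟩ :
        (b' - N, a') ∈ Win N E')).2.2.2
      rw [h'.per] at this
      simpa using this
  funext a b
  exact propext ⟨key h h' hW a b, key h' h hW.symm a b⟩

theorem LM.rot {N : ℤ} {t : ℤ → ℝ} (ht : Circ N t) {E : ℤ → ℤ → Prop} (h : LM N t E) (k : ℤ) :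
    LM N (fun j => t (j - -k)) (rot k E) := by
  refine ⟨h.1.rot k, fun F hF => ?_⟩
  rw [lens_rot h.1.toPreTri (ht.translate (-k)), ← lens_rot hF.toPreTri ht (-k)]
  convert h.2 _ (hF.rot (-k)) using 3
  funext j
  congr 1
  ring

/-- The indices of the vertices other than `N - 1`, for the `(N - 1)`-gon obtained by cutting off
that vertex. -/
def skip (N k : ℤ) : ℤ := k + k / (N - 1)

theorem skip_add {N : ℤ} (hN : 2 ≤ N) (k : ℤ) : skip N (k + (N - 1)) = skip N k + N := by
  unfold skip
  rw [Int.add_ediv_of_dvd_right (dvd_refl _), Int.ediv_self (by omega)]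
  ring

theorem skip_strictMono {N : ℤ} (hN : 2 ≤ N) : StrictMono (skip N) := fun a b hab => by
  have := Int.ediv_le_ediv (show 0 < N - 1 by omega) hab.le
  unfold skip
  omega

theorem skip_of_lt {N k : ℤ} (h0 : 0 ≤ k) (hk : k < N - 1) : skip N k = k := by
  unfold skip
  rw [Int.ediv_eq_zero_of_lt h0 hk, add_zero]

theorem Circ.skip {N : ℤ} (hN : 2 ≤ N) {t : ℤ → ℝ} (ht : Circ N t) :
    Circ (N - 1) (t ∘ skip N) where
  mono := ht.mono.comp (skip_strictMono hN)
  per := fun k => by simp only [Function.comp]; rw [skip_add hN, ht.per]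
  gen := fun a b c d h1 h2 h3 h4 => by
    have hm := skip_strictMono hN
    have := hm h4
    rw [skip_add hN] at this
    exact ht.gen _ _ _ _ (hm h1) (hm h2) (hm h3) this

/-- The diagonals left after cutting off the vertex `N - 1`. -/
def cut (N : ℤ) (E : ℤ → ℤ → Prop) (a b : ℤ) : Prop :=
  a + 2 ≤ b ∧ b + 2 ≤ a + (N - 1) ∧ E (skip N a) (skip N b)

theorem lens_of_Win_eq {N : ℤ} {t : ℤ → ℝ} {E E₁ : ℤ → ℤ → Prop} (h₁ : PreTri (N - 1) E₁)
    (hW : Win N E = insert (0, N - 2) (Win (N - 1) E₁)) :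
    lens N t E = Real.sin (t (N - 2) - t 0) ::ₘ lens (N - 1) (t ∘ skip N) E₁ ∧
      (Win N E).card = (Win (N - 1) E₁).card + 1 := by
  have hn : (0, N - 2) ∉ Win (N - 1) E₁ := fun h => by
    have := h₁.hi (mem_Win.1 h).2.2.2
    dsimp only at this
    omega
  constructor
  · rw [lens, lens, hW, Finset.insert_val_of_notMem hn, Multiset.map_cons]
    congr 1
    refine Multiset.map_congr rfl fun p hp => ?_
    have := mem_Win.1 (Finset.mem_def.2 hp)
    simp only [Function.comp]
    rw [skip_of_lt this.1 (by omega), skip_of_lt (by omega) this.2.2.1]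
  · rw [hW, Finset.card_insert_of_notMem hn]

theorem Tri.cut {N : ℤ} (hN : 4 ≤ N) {E : ℤ → ℤ → Prop} (h : Tri N E) (hE : Ear E (N - 1)) :
    Tri (N - 1) (cut N E) ∧ Win N E = insert (0, N - 2) (Win (N - 1) (cut N E)) := by
  have hm := skip_strictMono (N := N) (by omega)
  have h0 : E 0 (N - 2) := by
    rw [h.per]
    have : E (N - 1 - 1) (N - 1 + 1) := hE
    rwa [show N - 1 - 1 = N - 2 by ring, show N - 1 + 1 = 0 + N by ring] at this
  have hpre : PreTri (N - 1) (_root_.cut N E) := by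
    refine ⟨fun h => h.1, fun h => h.2.1, ?_, ?_⟩
    · intro a b
      unfold _root_.cut
      rw [skip_add (by omega), ← h.per]
      constructor <;> rintro ⟨h1, h2, h3⟩ <;> exact ⟨by omega, by omega, h3⟩
    · rintro a b c d ⟨-, -, h1⟩ ⟨-, -, h2⟩ h3 h4 h5 h6
      have := hm h6
      rw [skip_add (by omega)] at this
      exact h.nc h1 h2 (hm h3) (hm h4) (hm h5) this
  have hW : Win N E = insert (0, N - 2) (Win (N - 1) (_root_.cut N E)) := by
    ext ⟨a, b⟩
    rw [Finset.mem_insert, mem_Win, mem_Win, Prod.mk.injEq]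
    dsimp only
    constructor
    · rintro ⟨h1, h2, h3, h4⟩
      have hlo := h.lo h4
      have hb : b ≠ N - 1 := fun e => h.tip' hE (e ▸ h4)
      by_cases hc : b + 2 ≤ a + (N - 1)
      · refine Or.inr ⟨h1, h2, by omega, hlo, hc, ?_⟩
        rwa [skip_of_lt h1 (by omega), skip_of_lt (by omega) (by omega)]
      · exact Or.inl (by omega)
    · rintro (⟨rfl, rfl⟩ | ⟨h1, h2, h3, h4, h5, h6⟩)
      · exact ⟨le_rfl, by omega, by omega, h0⟩
      · rw [skip_of_lt h1 (by omega), skip_of_lt (by omega) (by omega)] at h6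
        exact ⟨h1, h2, by omega, h6⟩
  refine ⟨⟨hpre, ?_⟩, hW⟩
  have := (lens_of_Win_eq (t := fun _ => 0) hpre hW).2
  have := h.card
  omega

theorem Tri.exists_glue {N : ℤ} (hN : 4 ≤ N) {F : ℤ → ℤ → Prop} (h : Tri (N - 1) F) :
    ∃ E, Tri N E ∧ Win N E = insert (0, N - 2) (Win (N - 1) F) := by
  have hpre : PreTri N (ext N fun x y => F x y ∧ y < N - 1 ∨ x = 0 ∧ y = N - 2) := by
    refine preTri_ext (by omega) ?_ ?_
    · rintro x y h1 h2 h3 (⟨h4, h5⟩ | h4)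
      · have := h.lo h4
        have := h.hi h4
        omega
      · omega
    · rintro x y z w h1 h2 h3 h4 h5 (⟨h6, h7⟩ | h6) (⟨h8, h9⟩ | h8)
      · exact h.nc h6 h8 h2 h3 h4 (by omega)
      all_goals omega
  have hW : Win N (ext N fun x y => F x y ∧ y < N - 1 ∨ x = 0 ∧ y = N - 2) =
      insert (0, N - 2) (Win (N - 1) F) := by
    ext ⟨a, b⟩
    rw [Finset.mem_insert, mem_Win_ext, mem_Win, Prod.mk.injEq]
    dsimp only
    constructor
    · rintro ⟨h1, h2, h3, h4 | h4⟩
      · exact Or.inr ⟨h1, h2, h4.2, h4.1⟩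
      · exact Or.inl h4
    · rintro (⟨rfl, rfl⟩ | ⟨h1, h2, h3, h4⟩)
      · exact ⟨le_rfl, by omega, by omega, Or.inr ⟨rfl, rfl⟩⟩
      · exact ⟨h1, h2, by omega, Or.inl ⟨h4, h3⟩⟩
  refine ⟨_, ⟨hpre, ?_⟩, hW⟩
  have := (lens_of_Win_eq (t := fun _ => 0) h.toPreTri hW).2
  have := h.card
  omega

theorem LM.cut {N : ℤ} (hN : 4 ≤ N) {t : ℤ → ℝ} {E : ℤ → ℤ → Prop} (h : LM N t E)
    (hE : Ear E (N - 1)) : LM (N - 1) (t ∘ skip N) (cut N E) := by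
  obtain ⟨hc, hW⟩ := h.1.cut hN hE
  refine ⟨hc, fun F hF hlt => ?_⟩
  obtain ⟨G, hG, hWG⟩ := hF.exists_glue hN
  refine h.2 G hG ?_
  rw [(lens_of_Win_eq hc.toPreTri hW).1, (lens_of_Win_eq hF.toPreTri hWG).1, sLt_cons_iff]
  exact hlt

/-- A common ear of two maximal triangulations can be cut off, so uniqueness follows by induction
on the number of vertices. -/
theorem LM.unique (n : ℕ) : ∀ {N : ℤ}, N = n + 3 → ∀ {t : ℤ → ℝ}, Circ N t →
    ∀ {E E' : ℤ → ℤ → Prop}, LM N t E → LM N t E' → E = E' := by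
  induction n with
  | zero =>
    rintro N rfl t - E E' h h'
    funext a b
    refine propext ⟨fun e => ?_, fun e => ?_⟩
    · have := h.1.lo e
      have := h.1.hi e
      push_cast at *
      omega
    · have := h'.1.lo e
      have := h'.1.hi e
      push_cast at *
      omega
  | succ n ih =>
    intro N hN t ht E E' h h'
    push_cast at hN
    have hN4 : 4 ≤ N := by omega
    obtain ⟨j, hj, hj'⟩ := exists_common_ear hN4 ht h h'
    have hr : ∀ {E}, Ear E j → Ear (_root_.rot (j - N + 1) E) (N - 1) := by
      intro E hj
      unfold Ear _root_.rot
      have : E (j - 1) (j + 1) := hj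
      rwa [show N - 1 - 1 + (j - N + 1) = j - 1 by ring,
        show N - 1 + 1 + (j - N + 1) = j + 1 by ring]
    have hk := h.rot ht (j - N + 1)
    have hk' := h'.rot ht (j - N + 1)
    have hcut := ih (by omega) ((ht.translate (-(j - N + 1))).skip (by omega))
      (hk.cut hN4 (hr hj)) (hk'.cut hN4 (hr hj'))
    have hrot := eq_of_Win_eq (by omega) hk.1.toPreTri hk'.1.toPreTri (by
      rw [(hk.1.cut hN4 (hr hj)).2, (hk'.1.cut hN4 (hr hj')).2, hcut])
    funext a b
    have := congrFun (congrFun hrot (a - (j - N + 1))) (b - (j - N + 1))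
    simpa [_root_.rot] using this

/-! ### Triangulations of `ZMod n` and periodic families of diagonals -/

section Lift

theorem intCast_eq {n : ℕ} [NeZero n] {a b : ℤ} (h : (a : ZMod n) = b) : ∃ u : ℤ, b = a + n * u := by
  rw [ZMod.intCast_eq_intCast_iff_dvd_sub] at h
  obtain ⟨u, hu⟩ := h
  exact ⟨u, by linarith⟩

theorem intCast_ne {n : ℕ} [NeZero n] {a b : ℤ} (h1 : a < b) (h2 : b < a + n) :
    (a : ZMod n) ≠ b := by
  intro h
  obtain ⟨u, hu⟩ := intCast_eq h
  have hn : (0 : ℤ) < n := by have := NeZero.pos n; omega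
  rcases le_or_gt u 0 with h | h <;> nlinarith

theorem val_cast_sub {n : ℕ} [NeZero n] {a b : ℤ} (h1 : a ≤ b) (h2 : b < a + n) :
    (((b : ZMod n) - (a : ZMod n)).val : ℤ) = b - a := by
  rw [← Int.cast_sub, ZMod.val_intCast, Int.emod_eq_of_lt (by omega) (by omega)]

/-- Every pair of distinct indices has a representative in the fundamental window. -/
theorem exists_rep {n : ℕ} [NeZero n] {i j : ZMod n} (hij : i ≠ j) :
    ∃ a b : ℤ, 0 ≤ a ∧ a < b ∧ b < n ∧ s((a : ZMod n), (b : ZMod n)) = s(i, j) := by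
  have hi := ZMod.val_lt i
  have hj := ZMod.val_lt j
  rcases lt_trichotomy i.val j.val with h | h | h
  · exact ⟨i.val, j.val, by omega, by omega, by omega, by simp⟩
  · exact absurd (ZMod.val_injective n h) hij
  · exact ⟨j.val, i.val, by omega, by omega, by omega, by simp [Sym2.eq_swap]⟩

/-- The two ways in which two pairs of integers can represent the same pair of indices. -/
theorem sym2_cast_eq {n : ℕ} [NeZero n] {a b c d : ℤ} (h1 : a < b) (h2 : b < a + n) (h3 : c < d)
    (h4 : d < c + n) (h : s((a : ZMod n), (b : ZMod n)) = s((c : ZMod n), (d : ZMod n))) :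
    ∃ u : ℤ, c = a + n * u ∧ d = b + n * u ∨ c = b + n * u ∧ d = a + n + n * u := by
  have hn : (0 : ℤ) < n := by have := NeZero.pos n; omega
  rcases Sym2.eq_iff.1 h with ⟨e1, e2⟩ | ⟨e1, e2⟩
  · obtain ⟨u, rfl⟩ := intCast_eq e1
    obtain ⟨v, rfl⟩ := intCast_eq e2
    have : u = v := by
      rcases lt_trichotomy u v with h | h | h
      · nlinarith
      · exact h
      · nlinarith
    subst this
    exact ⟨u, Or.inl ⟨rfl, rfl⟩⟩
  · obtain ⟨u, rfl⟩ := intCast_eq e1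
    obtain ⟨v, rfl⟩ := intCast_eq e2
    have : u = v + 1 := by
      rcases lt_trichotomy u (v + 1) with h | h | h
      · nlinarith
      · exact h
      · nlinarith
    subst this
    exact ⟨v, Or.inr ⟨rfl, by ring⟩⟩

/-- The periodic family of diagonals of a set of pairs of indices. -/
def toE {n : ℕ} (τ : Finset (Sym2 (ZMod n))) (a b : ℤ) : Prop :=
  a < b ∧ b < a + n ∧ s((a : ZMod n), (b : ZMod n)) ∈ τ

/-- The set of pairs of indices of a periodic family of diagonals. -/
noncomputable def ofE (n : ℕ) [NeZero n] (E : ℤ → ℤ → Prop) : Finset (Sym2 (ZMod n)) :=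
  (Win n E).image fun p => s((p.1 : ZMod n), (p.2 : ZMod n))

theorem injOn_Win (n : ℕ) [NeZero n] (E : ℤ → ℤ → Prop) :
    Set.InjOn (fun p : ℤ × ℤ => s((p.1 : ZMod n), (p.2 : ZMod n))) (Win n E) := by
  rintro ⟨a, b⟩ hp ⟨c, d⟩ hq h
  replace hp := mem_Win.1 hp
  replace hq := mem_Win.1 hq
  dsimp only at hp hq h
  have hn : (0 : ℤ) < n := by have := NeZero.pos n; omega
  obtain ⟨u, hu⟩ := sym2_cast_eq hp.2.1 (by omega) hq.2.1 (by omega) h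
  have hu1 : u < 1 := by
    by_contra! hc
    rcases hu with hu | hu <;> nlinarith
  have hu2 : -1 < u := by
    by_contra! hc
    rcases hu with hu | hu <;> nlinarith
  obtain rfl : u = 0 := by omega
  rw [mul_zero] at hu
  exact Prod.ext (by dsimp only; omega) (by dsimp only; omega)

theorem card_ofE {n : ℕ} [NeZero n] (E : ℤ → ℤ → Prop) : (ofE n E).card = (Win n E).card :=
  Finset.card_image_of_injOn (injOn_Win n E)

theorem mem_ofE {n : ℕ} [NeZero n] {E : ℤ → ℤ → Prop} (h : PreTri n E) {a b : ℤ} (h1 : a < b)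
    (h2 : b < a + n) : s((a : ZMod n), (b : ZMod n)) ∈ ofE n E ↔ E a b := by
  have key : ∀ {c d : ℤ}, c < d → d < c + n →
      s((a : ZMod n), (b : ZMod n)) = s((c : ZMod n), (d : ZMod n)) → (E c d ↔ E a b) := by
    intro c d h3 h4 e
    obtain ⟨u, ⟨rfl, rfl⟩ | ⟨rfl, rfl⟩⟩ := sym2_cast_eq h1 h2 h3 h4 e
    · exact h.shift_mul u
    · rw [h.shift_mul u, ← h.per]
  unfold ofE
  rw [Finset.mem_image]
  constructor
  · rintro ⟨⟨c, d⟩, hp, e⟩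
    have := mem_Win.1 hp
    dsimp only at this
    exact (key this.2.1 (by omega) e.symm).1 this.2.2.2
  · intro hab
    obtain ⟨c, d, h3, h4, h5, h6⟩ := exists_rep (intCast_ne h1 h2)
    exact ⟨(c, d), mem_Win.2 ⟨h3, h4, h5, (key h4 (by omega) h6.symm).2 hab⟩, h6⟩

theorem isDiag_cast {n : ℕ} [NeZero n] {a b : ℤ} (h1 : a < b) (h2 : b < a + n) :
    IsDiag s((a : ZMod n), (b : ZMod n)) ↔ a + 2 ≤ b ∧ b + 2 ≤ a + n := by
  constructor
  · rintro ⟨i, j, h, h3, -, h5⟩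
    have k1 : b ≠ a + 1 := by
      rintro rfl
      rcases Sym2.eq_iff.1 h with ⟨rfl, rfl⟩ | ⟨rfl, rfl⟩
      · exact h5 (by push_cast; rfl)
      · exact h3 (by push_cast; ring)
    have k2 : b ≠ a + n - 1 := by
      rintro rfl
      rcases Sym2.eq_iff.1 h with ⟨rfl, rfl⟩ | ⟨rfl, rfl⟩
      · exact h3 (by push_cast; simp)
      · exact h5 (by push_cast; simp)
    omega
  · rintro ⟨h3, h4⟩
    refine ⟨a, b, rfl, ?_, (intCast_ne h1 h2).symm, ?_⟩
    · have := intCast_ne (n := n) (a := b) (b := a - 1 + n) (by omega) (by omega)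
      simpa using this
    · have := intCast_ne (n := n) (a := a + 1) (b := b) (by omega) (by omega)
      simpa using this.symm

theorem ofE_toE {n : ℕ} [NeZero n] {τ : Finset (Sym2 (ZMod n))} (h : ∀ d ∈ τ, IsDiag d) :
    ofE n (toE τ) = τ := by
  ext d
  unfold ofE
  rw [Finset.mem_image]
  constructor
  · rintro ⟨p, hp, rfl⟩
    exact (mem_Win.1 hp).2.2.2.2.2
  · intro hd
    obtain ⟨i, j, rfl, -, hij, -⟩ := h d hd
    obtain ⟨a, b, h1, h2, h3, h4⟩ := exists_rep hij.symm
    exact ⟨(a, b), mem_Win.2 ⟨h1, h2, h3, h2, by dsimp only; omega, by rw [h4]; exact hd⟩, h4⟩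

theorem tri_toE {n : ℕ} [NeZero n] (hn : 4 ≤ n) {τ : Finset (Sym2 (ZMod n))}
    (h : IsTriangulation τ) : Tri n (toE τ) where
  lo := fun ⟨h1, h2, h3⟩ => ((isDiag_cast h1 h2).1 (h.2.1 _ h3)).1
  hi := fun ⟨h1, h2, h3⟩ => ((isDiag_cast h1 h2).1 (h.2.1 _ h3)).2
  per := by
    intro a b
    unfold toE
    push_cast
    rw [ZMod.natCast_self, add_zero, Sym2.eq_swap]
    constructor <;> rintro ⟨h1, h2, h3⟩ <;> exact ⟨by omega, by omega, h3⟩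
  nc := by
    rintro a b c d ⟨-, -, h1⟩ ⟨-, -, h2⟩ h3 h4 h5 h6
    refine h.2.2 _ h1 _ h2 ⟨a, b, c, d, rfl, rfl, ?_, ?_⟩
    · have e1 := val_cast_sub (n := n) (a := a) (b := c) (by omega) (by omega)
      have e2 := val_cast_sub (n := n) (a := a) (b := b) (by omega) (by omega)
      constructor <;> omega
    · have e1 := val_cast_sub (n := n) (a := b) (b := d) (by omega) (by omega)
      have e2 := val_cast_sub (n := n) (a := b) (b := a + n) (by omega) (by omega)
      push_cast at e2
      rw [ZMod.natCast_self, add_zero] at e2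
      constructor <;> omega
  card := by
    rw [← card_ofE, ofE_toE h.2.1, h.1]
    omega

theorem isTriangulation_ofE {n : ℕ} [NeZero n] (hn : 4 ≤ n) {E : ℤ → ℤ → Prop} (h : Tri n E) :
    IsTriangulation (ofE n E) := by
  refine ⟨?_, ?_, ?_⟩
  · have := h.card
    rw [card_ofE]
    omega
  · intro d hd
    obtain ⟨⟨a, b⟩, hp, rfl⟩ := Finset.mem_image.1 hd
    have hp := mem_Win.1 hp
    dsimp only at hp
    exact (isDiag_cast hp.2.1 (by omega)).2 ⟨h.lo hp.2.2.2, h.hi hp.2.2.2⟩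
  · rintro d hd e he ⟨i, j, k, l, rfl, rfl, ⟨h1, h2⟩, h3, h4⟩
    -- integers `A < K < J < L < A + n` representing the four indices
    obtain ⟨A, rfl⟩ := ZMod.intCast_surjective i
    obtain ⟨K, hK, hK'⟩ : ∃ K : ℤ, (K : ZMod n) = k ∧ ((k - A).val : ℤ) = K - A :=
      ⟨A + (k - A).val, by push_cast; rw [ZMod.natCast_zmod_val]; ring, by ring⟩
    obtain ⟨J, hJ, hJ'⟩ : ∃ J : ℤ, (J : ZMod n) = j ∧ ((j - A).val : ℤ) = J - A :=
      ⟨A + (j - A).val, by push_cast; rw [ZMod.natCast_zmod_val]; ring, by ring⟩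
    obtain ⟨L, hL, hL'⟩ : ∃ L : ℤ, (L : ZMod n) = l ∧ ((l - j).val : ℤ) = L - J :=
      ⟨J + (l - j).val, by push_cast; rw [ZMod.natCast_zmod_val, hJ]; ring, by ring⟩
    have hlt := ZMod.val_lt (j - (A : ZMod n))
    have hAJ := val_cast_sub (n := n) (a := J) (b := A + n) (by omega) (by omega)
    push_cast at hAJ
    rw [ZMod.natCast_self, add_zero, hJ] at hAJ
    rw [← hJ, mem_ofE h.toPreTri (by omega) (by omega)] at hd
    rw [← hK, ← hL, mem_ofE h.toPreTri (by omega) (by omega)] at he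
    exact h.nc hd he (by omega) (by omega) (by omega) (by omega)

theorem toE_ofE {n : ℕ} [NeZero n] {E : ℤ → ℤ → Prop} (h : PreTri n E) :
    toE (ofE n E) = E := by
  funext a b
  refine propext ⟨fun ⟨h1, h2, h3⟩ => (mem_ofE h h1 h2).1 h3, fun hab => ?_⟩
  have h1 := h.lo hab
  have h2 := h.hi hab
  exact ⟨by omega, by omega, (mem_ofE h (by omega) (by omega)).2 hab⟩

end Lift

/-! ### Lengths -/

section Lengths

theorem norm_pt_sub (α β : ℝ) : ‖pt α - pt β‖ = 2 * |Real.sin ((β - α) / 2)| := by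
  have h : ‖pt α - pt β‖ ^ 2 = (2 * |Real.sin ((β - α) / 2)|) ^ 2 := by
    rw [EuclideanSpace.norm_sq_eq, mul_pow, sq_abs, Fin.sum_univ_two, Real.norm_eq_abs,
      Real.norm_eq_abs, sq_abs, sq_abs]
    simp only [pt, PiLp.sub_apply, Matrix.cons_val_zero,
      Matrix.cons_val_one, WithLp.equiv_symm_apply]
    have h1 : Real.cos (β - α) = 1 - 2 * Real.sin ((β - α) / 2) ^ 2 := by
      have h2 := Real.cos_two_mul ((β - α) / 2)
      have h3 := Real.sin_sq_add_cos_sq ((β - α) / 2)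
      rw [show 2 * ((β - α) / 2) = β - α by ring] at h2
      linarith
    rw [Real.cos_sub] at h1
    have h2 := Real.sin_sq_add_cos_sq α
    have h3 := Real.sin_sq_add_cos_sq β
    nlinarith
  exact (sq_eq_sq₀ (norm_nonneg _) (by positivity)).1 h

/-- The half-angles `θ i / 2`, extended quasi-periodically to the integers. -/
noncomputable def halfAngle {n : ℕ} (θ : ZMod n → ℝ) (k : ℤ) : ℝ :=
  θ (k : ZMod n) / 2 + (k / (n : ℤ) : ℤ) * Real.pi

variable {θ : ZMod n → ℝ} {p : ZMod n → EuclideanSpace ℝ (Fin 2)}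

theorem halfAngle_strictMono (hmono : ∀ i j : ZMod n, i.val < j.val → θ i < θ j)
    (hlb : ∀ i : ZMod n, 0 ≤ θ i) (hub : ∀ i : ZMod n, θ i < 2 * Real.pi) :
    StrictMono (halfAngle θ) := by
  intro a b hab
  have hn : (0 : ℤ) < n := by have := NeZero.pos n; omega
  unfold halfAngle
  rcases (Int.ediv_le_ediv hn hab.le).eq_or_lt with h | h
  · rw [h]
    have := hmono a b (by
      have e1 := ZMod.val_intCast (n := n) a
      have e2 := ZMod.val_intCast (n := n) b
      have h3 := Int.emod_add_mul_ediv a n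
      have h4 := Int.emod_add_mul_ediv b n
      rw [h] at h3
      omega)
    linarith
  · have h1 := hlb b
    have h2 := hub a
    have h3 : ((a / (n : ℤ) : ℤ) : ℝ) + 1 ≤ (b / (n : ℤ) : ℤ) := by exact_mod_cast h
    nlinarith [Real.pi_pos]

theorem halfAngle_add (k : ℤ) : halfAngle θ (k + n) = halfAngle θ k + Real.pi := by
  have hn : (n : ℤ) ≠ 0 := by have := NeZero.pos n; omega
  unfold halfAngle
  rw [Int.add_ediv_of_dvd_right (dvd_refl _), Int.ediv_self hn]
  push_cast
  rw [ZMod.natCast_self, add_zero]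
  ring

/-- The length of a chord or diagonal is twice the sine of the inscribed angle it subtends. -/
theorem norm_sub_eq (hmono : ∀ i j : ZMod n, i.val < j.val → θ i < θ j)
    (hlb : ∀ i : ZMod n, 0 ≤ θ i) (hub : ∀ i : ZMod n, θ i < 2 * Real.pi)
    (hp : ∀ i : ZMod n, p i = pt (θ i)) {a b : ℤ} (h1 : a < b) (h2 : b < a + n) :
    ‖p a - p b‖ = 2 * Real.sin (halfAngle θ b - halfAngle θ a) := by
  have hm := halfAngle_strictMono hmono hlb hub
  have e1 := hm h1
  have e2 := hm h2
  rw [halfAngle_add] at e2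
  rw [hp, hp, norm_pt_sub, ← abs_of_pos (Real.sin_pos_of_pos_of_lt_pi (sub_pos.2 e1)
    (by linarith))]
  have : halfAngle θ b - halfAngle θ a =
      (θ b - θ a) / 2 + ((b / (n : ℤ) - a / (n : ℤ) : ℤ) : ℝ) * Real.pi := by
    unfold halfAngle
    push_cast
    ring
  rw [this, Real.sin_add_int_mul_pi, abs_mul, abs_neg_one_zpow, one_mul]

theorem circ_halfAngle (hmono : ∀ i j : ZMod n, i.val < j.val → θ i < θ j)
    (hlb : ∀ i : ZMod n, 0 ≤ θ i) (hub : ∀ i : ZMod n, θ i < 2 * Real.pi)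
    (hp : ∀ i : ZMod n, p i = pt (θ i)) (hsym : ¬ HasSymQuad p) : Circ n (halfAngle θ) where
  mono := halfAngle_strictMono hmono hlb hub
  per := halfAngle_add
  gen := by
    intro a b c d h1 h2 h3 h4 h
    have e1 := norm_sub_eq hmono hlb hub hp (a := a) (b := c) (by omega) (by omega)
    have e2 := norm_sub_eq hmono hlb hub hp (a := b) (b := d) (by omega) (by omega)
    have e : ‖p a - p c‖ = ‖p b - p d‖ := by rw [e1, e2, h]
    have e' : ‖p c - p a‖ = ‖p b - p d‖ := by rw [norm_sub_rev, e]
    have e'' : ‖p a - p c‖ = ‖p d - p b‖ := by rw [norm_sub_rev (p d), e]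
    have e''' : ‖p c - p a‖ = ‖p d - p b‖ := by rw [norm_sub_rev, e'']
    have hn : (0 : ℤ) < n := by have := NeZero.pos n; omega
    have m1 := Int.emod_nonneg a hn.ne'
    have m2 := Int.emod_lt_of_pos a hn
    have m3 := Int.emod_add_mul_ediv a n
    have va := ZMod.val_intCast (n := n) a
    have vb := ZMod.val_intCast (n := n) b
    have vc := ZMod.val_intCast (n := n) c
    have vd := ZMod.val_intCast (n := n) d
    have wb := emod_cases (N := n) (k := a / n) (z := b) (by omega) (by omega)
    have wc := emod_cases (N := n) (k := a / n) (z := c) (by omega) (by omega)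
    have wd := emod_cases (N := n) (k := a / n) (z := d) (by omega) (by omega)
    generalize (n : ℤ) * (a / n) = q at *
    by_cases hd : d < q + n
    · exact hsym ⟨a, b, c, d, by omega, by omega, by omega, e⟩
    by_cases hc : c < q + n
    · exact hsym ⟨d, a, b, c, by omega, by omega, by omega, e''.symm⟩
    by_cases hb : b < q + n
    · exact hsym ⟨c, d, a, b, by omega, by omega, by omega, e'''⟩
    · exact hsym ⟨b, c, d, a, by omega, by omega, by omega, e'.symm⟩

theorem map_len (hmono : ∀ i j : ZMod n, i.val < j.val → θ i < θ j)
    (hlb : ∀ i : ZMod n, 0 ≤ θ i) (hub : ∀ i : ZMod n, θ i < 2 * Real.pi)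
    (hp : ∀ i : ZMod n, p i = pt (θ i)) {τ : Finset (Sym2 (ZMod n))} (h : IsTriangulation τ) :
    τ.val.map (len p) = (lens n (halfAngle θ) (toE τ)).map (2 * ·) := by
  conv_lhs => rw [← ofE_toE h.2.1]
  unfold ofE lens
  rw [Finset.image_val_of_injOn (injOn_Win n _), Multiset.map_map, Multiset.map_map]
  refine Multiset.map_congr rfl fun q hq => ?_
  have := mem_Win.1 (Finset.mem_def.2 hq)
  exact norm_sub_eq hmono hlb hub hp this.2.1 (by omega)

end Lengths

/-! ### Length maximal triangulations -/

section LengthMax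

theorem sLt_map_iff {f : ℝ → ℝ} {s : Set ℝ} (hf : StrictMonoOn f s) {M M' : Multiset ℝ}
    (hM : ∀ x ∈ M, x ∈ s) (hM' : ∀ x ∈ M', x ∈ s) : SLt (M.map f) (M'.map f) ↔ SLt M M' := by
  refine ⟨fun h => ?_, SLt.map hf hM hM'⟩
  rcases SLt.trichotomy M M' with h' | rfl | h'
  · exact h'
  · exact absurd h h.asymm
  · exact absurd h (SLt.map hf hM' hM h').asymm

theorem card_lens {N : ℤ} {E : ℤ → ℤ → Prop} (h : Tri N E) (t : ℤ → ℝ) :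
    ((lens N t E).card : ℤ) = N - 3 := by
  unfold lens
  rw [Multiset.card_map]
  exact h.card

variable {θ : ZMod n → ℝ} {p : ZMod n → EuclideanSpace ℝ (Fin 2)}

theorem lexLE_sortedLengths_iff (hmono : ∀ i j : ZMod n, i.val < j.val → θ i < θ j)
    (hlb : ∀ i : ZMod n, 0 ≤ θ i) (hub : ∀ i : ZMod n, θ i < 2 * Real.pi)
    (hp : ∀ i : ZMod n, p i = pt (θ i)) {τ τ' : Finset (Sym2 (ZMod n))}
    (h : IsTriangulation τ) (h' : IsTriangulation τ') :
    lexLE (sortedLengths p τ') (sortedLengths p τ) ↔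
      ¬ SLt (lens n (halfAngle θ) (toE τ)) (lens n (halfAngle θ) (toE τ')) := by
  unfold lexLE sortedLengths
  rw [lex_sort_iff (by simp [h.1, h'.1]), map_len hmono hlb hub hp h, map_len hmono hlb hub hp h',
    sLt_map_iff (s := Set.univ) (fun a _ b _ hab => mul_lt_mul_of_pos_left hab two_pos)
      (fun _ _ => trivial) (fun _ _ => trivial)]

theorem lengthMaximal_iff (hn : 4 ≤ n)
    (hmono : ∀ i j : ZMod n, i.val < j.val → θ i < θ j)
    (hlb : ∀ i : ZMod n, 0 ≤ θ i) (hub : ∀ i : ZMod n, θ i < 2 * Real.pi)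
    (hp : ∀ i : ZMod n, p i = pt (θ i)) {τ : Finset (Sym2 (ZMod n))} :
    LengthMaximal p τ ↔ IsTriangulation τ ∧ LM n (halfAngle θ) (toE τ) := by
  constructor
  · rintro ⟨h, hmax⟩
    refine ⟨h, tri_toE hn h, fun F hF => ?_⟩
    have h' := isTriangulation_ofE hn hF
    have := (lexLE_sortedLengths_iff hmono hlb hub hp h h').1 (hmax _ h')
    rwa [toE_ofE hF.toPreTri] at this
  · rintro ⟨h, -, hmax⟩
    exact ⟨h, fun τ' h' => (lexLE_sortedLengths_iff hmono hlb hub hp h h').2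
      (hmax _ (tri_toE hn h'))⟩

theorem exists_lengthMaximal (hn : 4 ≤ n) (p : ZMod n → EuclideanSpace ℝ (Fin 2)) :
    ∃ τ, LengthMaximal p τ := by
  classical
  have hne : (Finset.univ.filter fun τ : Finset (Sym2 (ZMod n)) => IsTriangulation τ).Nonempty :=
    ⟨_, Finset.mem_filter.2 ⟨Finset.mem_univ _,
      isTriangulation_ofE hn (tri_fanR (p := 1) le_rfl (by omega))⟩⟩
  obtain ⟨τ, hτ, hmax⟩ := Finset.exists_max_image _ (sortedLengths p) hne
  refine ⟨τ, (Finset.mem_filter.1 hτ).2, fun τ' h' => ?_⟩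
  rcases (hmax τ' (Finset.mem_filter.2 ⟨Finset.mem_univ _, h'⟩)).eq_or_lt with h | h
  · exact Or.inl h
  · exact Or.inr h

theorem existsUnique_lengthMaximal (hn : 4 ≤ n)
    (hmono : ∀ i j : ZMod n, i.val < j.val → θ i < θ j)
    (hlb : ∀ i : ZMod n, 0 ≤ θ i) (hub : ∀ i : ZMod n, θ i < 2 * Real.pi)
    (hp : ∀ i : ZMod n, p i = pt (θ i)) (hsym : ¬ HasSymQuad p) :
    ∃! τ : Finset (Sym2 (ZMod n)), LengthMaximal p τ := by
  obtain ⟨τ, hτ⟩ := exists_lengthMaximal hn p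
  refine ⟨τ, hτ, fun τ' hτ' => ?_⟩
  obtain ⟨h, hm⟩ := (lengthMaximal_iff hn hmono hlb hub hp).1 hτ
  obtain ⟨h', hm'⟩ := (lengthMaximal_iff hn hmono hlb hub hp).1 hτ'
  have := LM.unique (n - 3) (N := n) (by omega) (circ_halfAngle hmono hlb hub hp hsym) hm' hm
  rw [← ofE_toE h'.2.1, this, ofE_toE h.2.1]

end LengthMax

/-! ### Angles of a triangulation -/

section Angles

theorem side_nc {N : ℤ} {E : ℤ → ℤ → Prop} (h : PreTri N E) {a b c d : ℤ} (h1 : Side N E a b)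
    (h2 : Side N E c d) (hac : a < c) (hcb : c < b) (hbd : b < d) (hda : d < a + N) : False := by
  rcases h1 with h1 | h1 | h1
  · omega
  · rcases h2 with h2 | h2 | h2
    · omega
    · exact h.nc h1 h2 hac hcb hbd hda
    · omega
  · omega

open Classical in
/-- The sides and diagonals with both ends in `[x, y]`. -/
noncomputable def sidePairs (N : ℤ) (E : ℤ → ℤ → Prop) (x y : ℤ) : Finset (ℤ × ℤ) :=
  (Finset.Icc x y ×ˢ Finset.Icc x y).filter fun p => p.1 < p.2 ∧ Side N E p.1 p.2

open Classical in
/-- The triangles with all vertices in `[x, y]`, as increasing triples. -/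
noncomputable def triangles (N : ℤ) (E : ℤ → ℤ → Prop) (x y : ℤ) : Finset (ℤ × ℤ × ℤ) :=
  (Finset.Icc x y ×ˢ Finset.Icc x y ×ˢ Finset.Icc x y).filter fun q =>
    q.1 < q.2.1 ∧ q.2.1 < q.2.2 ∧ Side N E q.1 q.2.1 ∧ Side N E q.2.1 q.2.2 ∧ Side N E q.1 q.2.2

theorem mem_sidePairs {N : ℤ} {E : ℤ → ℤ → Prop} {x y a b : ℤ} :
    (a, b) ∈ sidePairs N E x y ↔ x ≤ a ∧ a < b ∧ b ≤ y ∧ Side N E a b := by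
  simp only [sidePairs, Finset.mem_filter, Finset.mem_product, Finset.mem_Icc]
  constructor
  · rintro ⟨⟨h1, h2⟩, h3, h4⟩; exact ⟨h1.1, h3, h2.2, h4⟩
  · rintro ⟨h1, h2, h3, h4⟩; exact ⟨⟨⟨h1, by omega⟩, by omega, h3⟩, h2, h4⟩

theorem mem_triangles {N : ℤ} {E : ℤ → ℤ → Prop} {x y a b c : ℤ} :
    (a, b, c) ∈ triangles N E x y ↔
      x ≤ a ∧ a < b ∧ b < c ∧ c ≤ y ∧ Side N E a b ∧ Side N E b c ∧ Side N E a c := by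
  simp only [triangles, Finset.mem_filter, Finset.mem_product, Finset.mem_Icc]
  constructor
  · rintro ⟨⟨h1, h2, h3⟩, h4, h5, h6⟩; exact ⟨h1.1, h4, h5, h3.2, h6⟩
  · rintro ⟨h1, h2, h3, h4, h5⟩
    exact ⟨⟨⟨h1, by omega⟩, ⟨by omega, by omega⟩, by omega, h4⟩, h2, h3, h5⟩

theorem sidePairs_split {N : ℤ} {E : ℤ → ℤ → Prop} (h : PreTri N E) {x c y : ℤ} (hxc : x < c)
    (hcy : c < y) (hy : y < x + N) (h1 : Side N E x c) (h2 : Side N E c y) (h3 : Side N E x y) :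
    sidePairs N E x y = insert (x, y) (sidePairs N E x c ∪ sidePairs N E c y) := by
  ext ⟨a, b⟩
  rw [Finset.mem_insert, Finset.mem_union, mem_sidePairs, mem_sidePairs, mem_sidePairs, Prod.mk_inj]
  constructor
  · rintro ⟨k1, k2, k3, k4⟩
    by_cases hb : b ≤ c
    · exact Or.inr (Or.inl ⟨k1, k2, hb, k4⟩)
    by_cases ha : c ≤ a
    · exact Or.inr (Or.inr ⟨ha, k2, k3, k4⟩)
    refine Or.inl ⟨?_, ?_⟩
    · by_contra hax
      exact side_nc h h1 k4 (by omega) (by omega) (by omega) (by omega)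
    · by_contra hby
      exact side_nc h k4 h2 (by omega) (by omega) (by omega) (by omega)
  · rintro (⟨rfl, rfl⟩ | ⟨k1, k2, k3, k4⟩ | ⟨k1, k2, k3, k4⟩)
    · exact ⟨le_rfl, by omega, le_rfl, h3⟩
    · exact ⟨k1, k2, by omega, k4⟩
    · exact ⟨by omega, k2, k3, k4⟩

theorem triangles_split {N : ℤ} {E : ℤ → ℤ → Prop} (h : PreTri N E) {x c y : ℤ} (hxc : x < c)
    (hcy : c < y) (hy : y < x + N) (h1 : Side N E x c) (h2 : Side N E c y) (h3 : Side N E x y) :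
    triangles N E x y = insert (x, c, y) (triangles N E x c ∪ triangles N E c y) := by
  ext ⟨a, b, d⟩
  rw [Finset.mem_insert, Finset.mem_union, mem_triangles, mem_triangles, mem_triangles,
    Prod.mk_inj, Prod.mk_inj]
  constructor
  · rintro ⟨k1, k2, k3, k4, k5, k6, k7⟩
    by_cases hb : d ≤ c
    · exact Or.inr (Or.inl ⟨k1, k2, k3, hb, k5, k6, k7⟩)
    by_cases ha : c ≤ a
    · exact Or.inr (Or.inr ⟨ha, k2, k3, k4, k5, k6, k7⟩)
    have e1 : a = x := by
      by_contra hax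
      exact side_nc h h1 k7 (by omega) (by omega) (by omega) (by omega)
    have e2 : d = y := by
      by_contra hby
      exact side_nc h k7 h2 (by omega) (by omega) (by omega) (by omega)
    refine Or.inl ⟨e1, ?_, e2⟩
    rcases lt_trichotomy b c with hbc | hbc | hbc
    · exact (side_nc h h1 k6 (by omega) (by omega) (by omega) (by omega)).elim
    · exact hbc
    · exact (side_nc h k5 h2 (by omega) (by omega) (by omega) (by omega)).elim
  · rintro (⟨rfl, rfl, rfl⟩ | ⟨k1, k2, k3, k4, k5⟩ | ⟨k1, k2, k3, k4, k5⟩)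
    · exact ⟨le_rfl, hxc, hcy, le_rfl, h1, h2, h3⟩
    · exact ⟨k1, k2, k3, by omega, k5⟩
    · exact ⟨by omega, k2, k3, k4, k5⟩

/-- Double counting of incidences between triangles and sides. A segment `{a, b}` with
`x ≤ a < b ≤ y` is a short side (one of `{a, b}`, `{b, c}` in a triangle `a < b < c`) of exactly
one triangle in `[x, y]`, unless it is `{x, y}`; it is the long side `{a, c}` of exactly one such
triangle, unless `b = a + 1`. -/
theorem Tri.sum_triangles {M : Type*} [AddCommMonoid M] {N : ℤ} {E : ℤ → ℤ → Prop} (h : Tri N E)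
    (f g : ℤ → ℤ → M) (m : ℕ) : ∀ {x y : ℤ}, y = x + 1 + m → y < x + N → Side N E x y →
      ∑ q ∈ triangles N E x y, (f q.1 q.2.1 + f q.2.1 q.2.2 + g q.1 q.2.2) + f x y =
        ∑ q ∈ sidePairs N E x y, (f q.1 q.2 + if q.1 + 2 ≤ q.2 then g q.1 q.2 else 0) := by
  induction m using Nat.strong_induction_on with
  | _ m ih =>
    intro x y hxy hy hs
    rcases Nat.eq_zero_or_pos m with rfl | hm
    · have e1 : triangles N E x y = ∅ := by
        refine Finset.eq_empty_of_forall_notMem ?_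
        rintro ⟨a, b, c⟩ hq
        rw [mem_triangles] at hq
        omega
      have e2 : sidePairs N E x y = {(x, y)} := by
        ext ⟨a, b⟩
        rw [mem_sidePairs, Finset.mem_singleton, Prod.mk_inj]
        constructor
        · rintro ⟨h1, h2, h3, -⟩; omega
        · rintro ⟨rfl, rfl⟩; exact ⟨le_rfl, by omega, le_rfl, hs⟩
      rw [e1, e2, Finset.sum_empty, Finset.sum_singleton, if_neg (by dsimp only; omega), zero_add,
        add_zero]
    · obtain ⟨c, hxc, hcy, h1, h2⟩ := h.apex (by omega) hs
      have i1 := ih (c - x - 1).toNat (by omega) (x := x) (y := c) (by omega) (by omega) h1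
      have i2 := ih (y - c - 1).toNat (by omega) (x := c) (y := y) (by omega) (by omega) h2
      have d1 : Disjoint (triangles N E x c) (triangles N E c y) := by
        rw [Finset.disjoint_left]
        rintro ⟨a, b, d⟩ k1 k2
        rw [mem_triangles] at k1 k2
        omega
      have d2 : Disjoint (sidePairs N E x c) (sidePairs N E c y) := by
        rw [Finset.disjoint_left]
        rintro ⟨a, b⟩ k1 k2
        rw [mem_sidePairs] at k1 k2
        omega
      have n1 : (x, c, y) ∉ triangles N E x c ∪ triangles N E c y := by
        rw [Finset.mem_union, mem_triangles, mem_triangles]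
        omega
      have n2 : (x, y) ∉ sidePairs N E x c ∪ sidePairs N E c y := by
        rw [Finset.mem_union, mem_sidePairs, mem_sidePairs]
        omega
      rw [triangles_split h.toPreTri hxc hcy hy h1 h2 hs,
        sidePairs_split h.toPreTri hxc hcy hy h1 h2 hs, Finset.sum_insert n1, Finset.sum_insert n2,
        Finset.sum_union d1, Finset.sum_union d2, ← i1, ← i2, if_pos (by dsimp only; omega)]
      dsimp only
      abel

/-- The multiset of all angles, in terms of half-angles: the inscribed angles of a triangle
`a < b < c` are `t c - t b` at `a`, `π - (t c - t a)` at `b` and `t b - t a` at `c`. -/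
noncomputable def angs (N : ℤ) (t : ℤ → ℝ) (E : ℤ → ℤ → Prop) : Multiset ℝ :=
  ∑ q ∈ triangles N E 0 (N - 1),
    ({t q.2.2 - t q.2.1, Real.pi - (t q.2.2 - t q.1), t q.2.1 - t q.1} : Multiset ℝ)

theorem arcsin_pair {u : ℝ} (h0 : 0 ≤ u) (hpi : u ≤ Real.pi) :
    ({u} : Multiset ℝ) + {Real.pi - u} =
      {Real.arcsin (Real.sin u)} + {Real.pi - Real.arcsin (Real.sin u)} := by
  rcases le_or_gt u (Real.pi / 2) with h | h
  · rw [Real.arcsin_sin (by linarith [Real.pi_pos]) h]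
  · rw [← Real.sin_pi_sub, Real.arcsin_sin (by linarith) (by linarith), sub_sub_cancel, add_comm]

theorem sum_singleton_map {ι : Type*} (s : Finset ι) (f : ι → ℝ) :
    ∑ i ∈ s, ({f i} : Multiset ℝ) = s.val.map f := by
  have h := Multiset.sum_map_singleton (s.val.map f)
  rwa [Multiset.map_map] at h

/-- The part of the multiset of angles that does not depend on the triangulation. -/
noncomputable def angConst (N : ℤ) (t : ℤ → ℝ) : Multiset ℝ :=
  ∑ i ∈ Finset.Ico 0 (N - 1), ({t (i + 1) - t i} : Multiset ℝ) + {Real.pi - (t (N - 1) - t 0)}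

/-- Each side contributes a fixed angle; each diagonal contributes two angles, which are
`arcsin ℓ` and `π - arcsin ℓ` where `ℓ` is its half-length. -/
theorem angs_eq {N : ℤ} (hN : 4 ≤ N) {t : ℤ → ℝ} (ht : Circ N t) {E : ℤ → ℤ → Prop}
    (h : Tri N E) : angs N t E = angConst N t + ((lens N t E).map Real.arcsin +
      ((lens N t E).map Real.arcsin).map (fun x => Real.pi - x)) := by
  classical
  have key := h.sum_triangles (fun a b => ({t b - t a} : Multiset ℝ))
    (fun a b => ({Real.pi - (t b - t a)} : Multiset ℝ)) (N - 2).toNat (x := 0) (y := N - 1)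
    (by omega) (by omega) (Or.inr (Or.inr (by omega)))
  have e1 : sidePairs N E 0 (N - 1) = insert (0, N - 1)
      (((Finset.Ico 0 (N - 1)).image fun i => (i, i + 1)) ∪ Win N E) := by
    ext ⟨a, b⟩
    rw [Finset.mem_insert, Finset.mem_union, mem_sidePairs, mem_Win, Finset.mem_image, Prod.mk_inj]
    dsimp only
    constructor
    · rintro ⟨h1, h2, h3, h4 | h4 | h4⟩
      · exact Or.inr (Or.inl ⟨a, Finset.mem_Ico.2 ⟨h1, by omega⟩, by rw [h4]⟩)
      · exact Or.inr (Or.inr ⟨h1, h2, by omega, h4⟩)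
      · left; omega
    · rintro (⟨rfl, rfl⟩ | ⟨i, hi, hq⟩ | ⟨h1, h2, h3, h4⟩)
      · exact ⟨le_rfl, by omega, le_rfl, Or.inr (Or.inr (by omega))⟩
      · rw [Finset.mem_Ico] at hi
        obtain ⟨rfl, rfl⟩ := Prod.mk_inj.1 hq
        exact ⟨hi.1, by omega, by omega, Or.inl rfl⟩
      · exact ⟨h1, h2, by omega, Or.inr (Or.inl h4)⟩
  have n1 : (0, N - 1) ∉ (((Finset.Ico 0 (N - 1)).image fun i => (i, i + 1)) ∪ Win N E) := by
    rw [Finset.mem_union, mem_Win, Finset.mem_image]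
    rintro (⟨i, hi, hq⟩ | ⟨-, -, -, h4⟩)
    · obtain ⟨rfl, h5⟩ := Prod.mk_inj.1 hq
      omega
    · have := h.hi h4
      omega
  have d1 : Disjoint ((Finset.Ico 0 (N - 1)).image fun i => (i, i + 1)) (Win N E) := by
    rw [Finset.disjoint_left]
    rintro q hq hq'
    obtain ⟨i, -, rfl⟩ := Finset.mem_image.1 hq
    have := h.lo (mem_Win.1 hq').2.2.2
    dsimp only at this
    omega
  have e2 : ∑ q ∈ (Finset.Ico 0 (N - 1)).image (fun i => (i, i + 1)),
      (({t q.2 - t q.1} : Multiset ℝ) +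
        if q.1 + 2 ≤ q.2 then ({Real.pi - (t q.2 - t q.1)} : Multiset ℝ) else 0) =
      ∑ i ∈ Finset.Ico 0 (N - 1), ({t (i + 1) - t i} : Multiset ℝ) := by
    rw [Finset.sum_image (fun i _ j _ hij => (Prod.mk_inj.1 hij).1)]
    refine Finset.sum_congr rfl fun i _ => ?_
    rw [if_neg (by dsimp only; omega), add_zero]
  have e3 : ∑ q ∈ Win N E, (({t q.2 - t q.1} : Multiset ℝ) +
        if q.1 + 2 ≤ q.2 then ({Real.pi - (t q.2 - t q.1)} : Multiset ℝ) else 0) =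
      (lens N t E).map Real.arcsin +
        ((lens N t E).map Real.arcsin).map (fun x => Real.pi - x) := by
    unfold lens
    rw [Multiset.map_map, Multiset.map_map, ← sum_singleton_map, ← sum_singleton_map,
      ← Finset.sum_add_distrib]
    refine Finset.sum_congr rfl fun q hq => ?_
    have hw := mem_Win.1 hq
    rw [if_pos (h.lo hw.2.2.2)]
    refine arcsin_pair (sub_nonneg.2 (ht.mono hw.2.1).le) ?_
    have := ht.mono (show q.2 < q.1 + N by omega)
    rw [ht.per] at this
    linarith
  rw [e1, Finset.sum_insert n1, Finset.sum_union d1, e2, e3, if_pos (by dsimp only; omega)] at key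
  have e4 : angs N t E = ∑ q ∈ triangles N E 0 (N - 1), (({t q.2.1 - t q.1} : Multiset ℝ) +
      {t q.2.2 - t q.2.1} + {Real.pi - (t q.2.2 - t q.1)}) := by
    refine Finset.sum_congr rfl fun q _ => ?_
    simp only [Multiset.insert_eq_cons, ← Multiset.singleton_add]
    abel
  rw [← e4] at key
  refine add_right_cancel (key.trans ?_)
  unfold angConst
  abel

theorem sLt_angs {N : ℤ} (hN : 4 ≤ N) {t : ℤ → ℝ} (ht : Circ N t) {E E' : ℤ → ℤ → Prop}
    (h : Tri N E) (h' : Tri N E') (hlt : SLt (lens N t E) (lens N t E')) :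
    SLt (angs N t E) (angs N t E') := by
  have hmem : ∀ F, ∀ x ∈ lens N t F, x ∈ Set.Icc (-1 : ℝ) 1 := by
    intro F x hx
    obtain ⟨q, -, rfl⟩ := Multiset.mem_map.1 hx
    exact ⟨Real.neg_one_le_sin _, Real.sin_le_one _⟩
  have hle : ∀ F, ∀ x ∈ (lens N t F).map Real.arcsin, x ≤ Real.pi / 2 := by
    intro F x hx
    obtain ⟨y, -, rfl⟩ := Multiset.mem_map.1 hx
    exact Real.arcsin_le_pi_div_two y
  rw [angs_eq hN ht h, angs_eq hN ht h']
  exact ((hlt.map Real.strictMonoOn_arcsin (hmem _) (hmem _)).add_reflect (hle _)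
    (hle _)).add_left _

theorem sLt_angs_iff {N : ℤ} (hN : 4 ≤ N) {t : ℤ → ℝ} (ht : Circ N t) {E E' : ℤ → ℤ → Prop}
    (h : Tri N E) (h' : Tri N E') :
    SLt (angs N t E) (angs N t E') ↔ SLt (lens N t E) (lens N t E') := by
  refine ⟨fun hlt => ?_, sLt_angs hN ht h h'⟩
  rcases SLt.trichotomy (lens N t E) (lens N t E') with k | k | k
  · exact k
  · rw [angs_eq hN ht h, angs_eq hN ht h', k] at hlt
    exact absurd hlt hlt.asymm
  · exact absurd hlt (sLt_angs hN ht h' h k).asymm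

end Angles

/-! ### Angle maximal triangulations -/

section AngleMax

variable {θ : ZMod n → ℝ} {p : ZMod n → EuclideanSpace ℝ (Fin 2)}

theorem pt_eq_halfAngle (k : ℤ) :
    pt (θ k) = !₂[Real.cos (2 * halfAngle θ k), Real.sin (2 * halfAngle θ k)] := by
  have : 2 * halfAngle θ k = θ k + (k / (n : ℤ) : ℤ) * (2 * Real.pi) := by
    unfold halfAngle
    ring
  rw [this, Real.cos_add_int_mul_two_pi, Real.sin_add_int_mul_two_pi]
  rfl

/-- The inscribed angle theorem. -/
theorem angle_eq (hmono : ∀ i j : ZMod n, i.val < j.val → θ i < θ j)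
    (hlb : ∀ i : ZMod n, 0 ≤ θ i) (hub : ∀ i : ZMod n, θ i < 2 * Real.pi)
    (hp : ∀ i : ZMod n, p i = pt (θ i)) {a b c : ℤ} (h1 : a < b) (h2 : b < c) (h3 : c < a + n) :
    EuclideanGeometry.angle (p b) (p a) (p c) = halfAngle θ c - halfAngle θ b := by
  have hm := halfAngle_strictMono hmono hlb hub
  have m1 := hm h1
  have m2 := hm h2
  have m3 := hm h3
  rw [halfAngle_add] at m3
  have e1 := norm_sub_eq hmono hlb hub hp h1 (by omega)
  have e2 := norm_sub_eq hmono hlb hub hp (h1.trans h2) h3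
  rw [norm_sub_rev] at e1 e2
  have s1 := Real.sin_pos_of_pos_of_lt_pi (sub_pos.2 m1) (by linarith)
  have s2 := Real.sin_pos_of_pos_of_lt_pi (sub_pos.2 (m1.trans m2)) (by linarith)
  unfold EuclideanGeometry.angle InnerProductGeometry.angle
  rw [vsub_eq_sub, vsub_eq_sub, e1, e2]
  have hin : inner ℝ (p b - p a) (p c - p a) =
      Real.cos (halfAngle θ c - halfAngle θ b) * (2 * Real.sin (halfAngle θ b - halfAngle θ a) *
        (2 * Real.sin (halfAngle θ c - halfAngle θ a))) := by
    rw [hp, hp, hp, pt_eq_halfAngle, pt_eq_halfAngle, pt_eq_halfAngle]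
    simp only [PiLp.inner_apply, Fin.sum_univ_two, PiLp.sub_apply, Matrix.cons_val_zero,
      Matrix.cons_val_one, RCLike.inner_apply, conj_trivial]
    generalize halfAngle θ a = x
    generalize halfAngle θ b = y
    generalize halfAngle θ c = z
    have hc : ∀ u v : ℝ, Real.cos (2 * u) - Real.cos (2 * v) =
        -2 * Real.sin (u + v) * Real.sin (u - v) := by
      intro u v
      rw [Real.cos_sub_cos]
      ring_nf
    have hs : ∀ u v : ℝ, Real.sin (2 * u) - Real.sin (2 * v) =
        2 * Real.sin (u - v) * Real.cos (u + v) := by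
      intro u v
      rw [Real.sin_sub_sin]
      ring_nf
    rw [hc, hc, hs, hs, show z - y = (z + x) - (y + x) by ring, Real.cos_sub (z + x)]
    ring
  rw [hin, mul_div_assoc, div_self (by positivity), mul_one,
    Real.arccos_cos (by linarith) (by linarith)]

theorem isSide_cast {a b : ℤ} (h0 : 0 ≤ a) (h1 : a < b) (h2 : b < n)
    (τ : Finset (Sym2 (ZMod n))) :
    IsSide τ s((a : ZMod n), (b : ZMod n)) ↔ Side n (toE τ) a b := by
  unfold IsSide Side
  constructor
  · rintro (⟨i, hi⟩ | h)
    · obtain ⟨k, rfl⟩ := ZMod.intCast_surjective i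
      by_cases hn : (n : ℤ) = 1
      · omega
      have hi' : s((a : ZMod n), (b : ZMod n)) = s((k : ZMod n), ((k + 1 : ℤ) : ZMod n)) := by
        rw [hi]; push_cast; rfl
      obtain ⟨u, hu | hu⟩ := sym2_cast_eq h1 (by omega) (by omega) (by omega) hi'
      · left; omega
      · right; right; omega
    · exact Or.inr (Or.inl ⟨h1, by omega, h⟩)
  · rintro (rfl | h | h)
    · exact Or.inl ⟨a, by push_cast; rfl⟩
    · exact Or.inr h.2.2
    · obtain rfl : a = 0 := by omega
      obtain rfl : b = n - 1 := by omega
      exact Or.inl ⟨((n - 1 : ℤ) : ZMod n), by rw [Sym2.eq_swap]; push_cast; simp⟩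

theorem sortedAngles_eq (hmono : ∀ i j : ZMod n, i.val < j.val → θ i < θ j)
    (hlb : ∀ i : ZMod n, 0 ≤ θ i) (hub : ∀ i : ZMod n, θ i < 2 * Real.pi)
    (hp : ∀ i : ZMod n, p i = pt (θ i)) (τ : Finset (Sym2 (ZMod n))) :
    sortedAngles p τ = (angs n (halfAngle θ) (toE τ)).sort (· ≤ ·) := by
  classical
  unfold sortedAngles angs
  congr 1
  have hside : ∀ i j : ZMod n, i.val < j.val →
      (IsSide τ s(i, j) ↔ Side n (toE τ) i.val j.val) := by
    intro i j hij
    have := ZMod.val_lt j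
    have h := isSide_cast (n := n) (a := i.val) (b := j.val) (by omega) (by omega) (by omega) τ
    simpa using h
  have hcast : ∀ a : ℤ, 0 ≤ a → a < n → (((a : ZMod n).val : ℕ) : ℤ) = a := by
    intro a h0 h1
    rw [ZMod.val_intCast, Int.emod_eq_of_lt h0 h1]
  refine Finset.sum_bij'
    (i := fun (x : ZMod n × ZMod n × ZMod n) _ => ((x.1.val : ℤ), (x.2.1.val : ℤ), (x.2.2.val : ℤ)))
    (j := fun (q : ℤ × ℤ × ℤ) _ => ((q.1 : ZMod n), (q.2.1 : ZMod n), (q.2.2 : ZMod n)))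
    ?_ ?_ ?_ ?_ ?_
  · rintro ⟨a, b, c⟩ hx
    obtain ⟨-, h1, h2, h3, h4, h5⟩ := Finset.mem_filter.1 hx
    dsimp only at h1 h2 h3 h4 h5 ⊢
    have := ZMod.val_lt c
    exact mem_triangles.2 ⟨by omega, by omega, by omega, by omega, (hside _ _ h1).1 h3,
      (hside _ _ h2).1 h4, (hside _ _ (h1.trans h2)).1 h5⟩
  · rintro ⟨a, b, c⟩ hq
    obtain ⟨h1, h2, h3, h4, h5, h6, h7⟩ := mem_triangles.1 hq
    have va := hcast a (by omega) (by omega)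
    have vb := hcast b (by omega) (by omega)
    have vc := hcast c (by omega) (by omega)
    refine Finset.mem_filter.2 ⟨Finset.mem_univ _, by dsimp only; omega, by dsimp only; omega,
      ?_, ?_, ?_⟩
    · exact (isSide_cast h1 h2 (by omega) τ).2 h5
    · exact (isSide_cast (by omega) h3 (by omega) τ).2 h6
    · exact (isSide_cast h1 (h2.trans h3) (by omega) τ).2 h7
  · rintro ⟨a, b, c⟩ -
    simp
  · rintro ⟨a, b, c⟩ hq
    obtain ⟨h1, h2, h3, h4, -⟩ := mem_triangles.1 hq
    dsimp only
    rw [hcast a (by omega) (by omega), hcast b (by omega) (by omega),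
      hcast c (by omega) (by omega)]
  · rintro ⟨a, b, c⟩ hx
    obtain ⟨-, h1, h2, -⟩ := Finset.mem_filter.1 hx
    dsimp only at h1 h2 ⊢
    have hc := ZMod.val_lt c
    have ea := angle_eq hmono hlb hub hp (a := a.val) (b := b.val) (c := c.val) (by omega)
      (by omega) (by omega)
    have eb := angle_eq hmono hlb hub hp (a := b.val) (b := c.val) (c := a.val + n) (by omega)
      (by omega) (by omega)
    have ec := angle_eq hmono hlb hub hp (a := c.val) (b := a.val + n) (c := b.val + n) (by omega)
      (by omega) (by omega)
    simp only [halfAngle_add] at eb ec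
    push_cast [ZMod.natCast_zmod_val, ZMod.natCast_self, add_zero] at ea eb ec
    rw [ea, EuclideanGeometry.angle_comm (p a) (p b), eb, ec, add_sub_add_right_eq_sub,
      show ∀ u v : ℝ, u + Real.pi - v = Real.pi - (v - u) by intros; ring]

theorem card_angs {N : ℤ} (hN : 4 ≤ N) {t : ℤ → ℝ} (ht : Circ N t) {E E' : ℤ → ℤ → Prop}
    (h : Tri N E) (h' : Tri N E') : (angs N t E).card = (angs N t E').card := by
  have e := card_lens h t
  have e' := card_lens h' t
  rw [angs_eq hN ht h, angs_eq hN ht h']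
  simp only [Multiset.card_add, Multiset.card_map]
  omega

theorem angleMaximal_iff (hn : 4 ≤ n) (hmono : ∀ i j : ZMod n, i.val < j.val → θ i < θ j)
    (hlb : ∀ i : ZMod n, 0 ≤ θ i) (hub : ∀ i : ZMod n, θ i < 2 * Real.pi)
    (hp : ∀ i : ZMod n, p i = pt (θ i)) (hsym : ¬ HasSymQuad p) (τ : Finset (Sym2 (ZMod n))) :
    AngleMaximal p τ ↔ LengthMaximal p τ := by
  refine and_congr_right fun h => forall_congr' fun τ' => imp_congr_right fun h' => ?_
  have ht := circ_halfAngle hmono hlb hub hp hsym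
  have hN : (4 : ℤ) ≤ n := by omega
  rw [lexLE_sortedLengths_iff hmono hlb hub hp h h', ← sLt_angs_iff hN ht (tri_toE hn h)
    (tri_toE hn h'), sortedAngles_eq hmono hlb hub hp, sortedAngles_eq hmono hlb hub hp]
  exact lex_sort_iff (card_angs hN ht (tri_toE hn h') (tri_toE hn h))

end AngleMax

theorem stmt0 {n : ℕ} [NeZero n] (hn : 4 ≤ n)
    (θ : ZMod n → ℝ)
    (hmono : ∀ i j : ZMod n, i.val < j.val → θ i < θ j)
    (hlb : ∀ i : ZMod n, 0 ≤ θ i) (hub : ∀ i : ZMod n, θ i < 2 * Real.pi)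
    (p : ZMod n → EuclideanSpace ℝ (Fin 2)) (hp : ∀ i : ZMod n, p i = pt (θ i))
    (hsym : ¬ HasSymQuad p) :
    (∃! τ : Finset (Sym2 (ZMod n)), AngleMaximal p τ) ∧
    (∃! τ : Finset (Sym2 (ZMod n)), LengthMaximal p τ) := by
  have hL := existsUnique_lengthMaximal hn hmono hlb hub hp hsym
  refine ⟨?_, hL⟩
  simpa only [angleMaximal_iff hn hmono hlb hub hp hsym] using hL
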